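/- Every element of the quasi-fundamental set F̃ is a positive imaginary root of the quiver Q. -/

import Mathlib

open Polynomial Matrix BigOperators

namespace DS

noncomputable section

/-- The data of a collection of HTL normal forms `B⁽ⁱ⁾`, `i = 0,…,p`, on `ℂⁿ`:
block counts `m i`, pole orders `kk i`, block sizes `nn i j`, irregular parts
`q i j ∈ s²ℂ[s]` (pairwise distinct, degree ≤ kk i), residue blocks `R i j`,
chosen annihilating eigenvalue lists `ξ i j`, and an identification of
`Σ j, Fin (nn i j)` with `Fin n` (the block decomposition of `ℂⁿ`). -/
structure Setup where
  p : ℕ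
  n : ℕ
  hn : 0 < n
  m : Fin (p+1) → ℕ
  hm : ∀ i, 0 < m i
  kk : Fin (p+1) → ℕ
  hkk : ∀ i, 0 < kk i
  nn : ∀ i : Fin (p+1), Fin (m i) → ℕ
  q : ∀ i : Fin (p+1), Fin (m i) → Polynomial ℂ
  hq0 : ∀ i j, (q i j).coeff 0 = 0
  hq1 : ∀ i j, (q i j).coeff 1 = 0
  hqdeg : ∀ i j, (q i j).natDegree ≤ kk i
  hqdist : ∀ i : Fin (p+1), ∀ j j' : Fin (m i), j ≠ j' → q i j ≠ q i j'
  e : ∀ i : Fin (p+1), Fin (m i) → ℕ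
  he : ∀ i j, 0 < e i j
  xi : ∀ (i : Fin (p+1)) (j : Fin (m i)), Fin (e i j) → ℂ
  R : ∀ (i : Fin (p+1)) (j : Fin (m i)), Matrix (Fin (nn i j)) (Fin (nn i j)) ℂ
  hxi : ∀ i j, (((List.finRange (e i j)).map fun l => R i j - xi i j l • 1).prod) = 0
  emb : ∀ i : Fin (p+1), (Σ j : Fin (m i), Fin (nn i j)) ≃ Fin n
  hreg : ∀ i : Fin (p+1), ¬ (1 < m i ∨ i = 0) → kk i = 1

/-- `i ∈ I_irr` : the indices of irregular singular points together with `0`. -/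
def Iirr (S : Setup) (i : Fin (S.p+1)) : Prop := 1 < S.m i ∨ i = 0

instance (S : Setup) : DecidablePred (Iirr S) := fun i =>
  inferInstanceAs (Decidable (1 < S.m i ∨ i = 0))

/-- Vertices `[i,j]` for `i ∈ I_irr`. -/
abbrev Vb (S : Setup) := Σ i : {i : Fin (S.p+1) // Iirr S i}, Fin (S.m i.1)

/-- Vertices `[i,j,k]` for `0 ≤ i ≤ p`, `1 ≤ j ≤ m⁽ⁱ⁾`, `1 ≤ k ≤ e[i,j]-1`
(the third component `κ` encodes `k = κ+1`). -/
abbrev Vr (S : Setup) := Σ i : Fin (S.p+1), Σ j : Fin (S.m i), Fin (S.e i j - 1)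

/-- The vertex set `Q₀` of the quiver `Q`. -/
abbrev V (S : Setup) := Vb S ⊕ Vr S

/-- `d_i(j,j') = deg (q_j - q_j') - 2`. -/
def dcnt (S : Setup) (i : Fin (S.p+1)) (j j' : Fin (S.m i)) : ℕ :=
  (S.q i j - S.q i j').natDegree - 2

/-- The number of arrows of `Q` from a vertex `a` to a vertex `b`. -/
def arr (S : Setup) : V S → V S → ℕ
  | .inl ⟨i, j⟩, .inl ⟨i', j'⟩ =>
      (if i.1 = 0 ∧ i'.1 ≠ 0 then 1 else 0) +
      (if h : i = i' then
        (if (j : ℕ) < (j' : ℕ) then dcnt S i.1 j (Fin.cast (by rw [h]) j') else 0)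
       else 0)
  | .inl _, .inr _ => 0
  | .inr ⟨i, j, κ⟩, .inl ⟨i', j'⟩ =>
      (if i = i'.1 ∧ (j : ℕ) = (j' : ℕ) ∧ (κ : ℕ) = 0 then 1 else 0) +
      (if ¬ Iirr S i ∧ i'.1 = 0 ∧ (j : ℕ) = 0 ∧ (κ : ℕ) = 0 then 1 else 0)
  | .inr ⟨i, j, κ⟩, .inr ⟨i', j', κ'⟩ =>
      if i = i' ∧ (j : ℕ) = (j' : ℕ) ∧ (κ : ℕ) = (κ' : ℕ) + 1 then 1 else 0

/-- The Euler form `⟨β,γ⟩` of the quiver `Q`. -/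
def eform (S : Setup) (β γ : V S → ℤ) : ℤ :=
  (∑ a : V S, β a * γ a) - ∑ a : V S, ∑ b : V S, (arr S a b : ℤ) * β a * γ b

/-- The symmetrized bilinear form `(β,γ)`. -/
def bform (S : Setup) (β γ : V S → ℤ) : ℤ := eform S β γ + eform S γ β

/-- The quadratic form `q(β)`. -/
def qform (S : Setup) (β : V S → ℤ) : ℤ := eform S β β

/-- `p(β) = 1 - q(β)`. -/
def pform (S : Setup) (β : V S → ℤ) : ℤ := 1 - qform S β

/-- The coordinate vector `ε_a`. -/
def eps (S : Setup) (a : V S) : V S → ℤ := fun b => if b = a then 1 else 0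

/-- The fundamental reflection `s_a`. -/
def refl1 (S : Setup) (a : V S) (β : V S → ℤ) : V S → ℤ :=
  fun b => β b - bform S β (eps S a) * eps S a b

/-- Iterated fundamental reflections (a Weyl group element). -/
def reflList (S : Setup) (l : List (V S)) (β : V S → ℤ) : V S → ℤ :=
  l.foldr (refl1 S) β

/-- The support of a vector. -/
def supp (S : Setup) (β : V S → ℤ) : Set (V S) := {a | β a ≠ 0}

/-- The support of `β` is connected in the underlying graph of `Q`. -/
def connSupp (S : Setup) (β : V S → ℤ) : Prop :=
  ∀ a ∈ supp S β, ∀ b ∈ supp S β,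
    Relation.ReflTransGen
      (fun x y => (0 < arr S x y + arr S y x) ∧ x ∈ supp S β ∧ y ∈ supp S β) a b

/-- The fundamental set of the root system of `Q` (all vertices of `Q` are loop-free). -/
def fund (S : Setup) (β : V S → ℤ) : Prop :=
  β ≠ 0 ∧ (∀ a, 0 ≤ β a) ∧ connSupp S β ∧ ∀ a : V S, bform S β (eps S a) ≤ 0

/-- Real roots of `Q`. -/
def isRealRoot (S : Setup) (β : V S → ℤ) : Prop :=
  ∃ (l : List (V S)) (a : V S), β = reflList S l (eps S a)

/-- Imaginary roots of `Q`. -/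
def isImagRoot (S : Setup) (β : V S → ℤ) : Prop :=
  ∃ (l : List (V S)) (γ : V S → ℤ), (fund S γ ∨ fund S (-γ)) ∧ β = reflList S l γ

/-- Roots of `Q`. -/
def isRoot (S : Setup) (β : V S → ℤ) : Prop := isRealRoot S β ∨ isImagRoot S β

/-- Positive roots of `Q`. -/
def isPosRoot (S : Setup) (β : V S → ℤ) : Prop := isRoot S β ∧ ∀ a, 0 ≤ β a

/-- The index `0` as an element of `I_irr`. -/
def i0 (S : Setup) : {i : Fin (S.p+1) // Iirr S i} := ⟨0, Or.inr rfl⟩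

/-- The vertex `[0,j]`. -/
def v0 (S : Setup) (j : Fin (S.m 0)) : V S := Sum.inl ⟨i0 S, j⟩

/-- The vertex `[i,j]` for `i ∈ I_irr`. -/
def vI (S : Setup) (i : {i : Fin (S.p+1) // Iirr S i}) (j : Fin (S.m i.1)) : V S :=
  Sum.inl ⟨i, j⟩

/-- The lattice `L`: `Σ_j β_[0,j] = Σ_j β_[i,j]` for all `i ∈ I_irr ∖ {0}`. -/
def inL (S : Setup) (β : V S → ℤ) : Prop :=
  ∀ i : {i : Fin (S.p+1) // Iirr S i}, i.1 ≠ 0 →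
    (∑ j : Fin (S.m 0), β (v0 S j)) = ∑ j : Fin (S.m i.1), β (vI S i j)

/-- `L⁺ = L ∩ (ℤ≥0)^{Q₀}`. -/
def inLpos (S : Setup) (β : V S → ℤ) : Prop := inL S β ∧ ∀ a, 0 ≤ β a

/-- The dimension vector `α` (as natural numbers):
`α_[i,j] = n⁽ⁱ⁾_j`, `α_[i,j,k] = rank ∏_{l=1}^k (R⁽ⁱ⁾_j - ξ^{[i,j]}_l)`. -/
noncomputable def alN (S : Setup) : V S → ℕ
  | .inl ⟨i, j⟩ => S.nn i.1 j
  | .inr ⟨i, j, κ⟩ =>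
      ((((List.finRange (S.e i j)).take ((κ : ℕ) + 1)).map
          fun l => S.R i j - S.xi i j l • 1).prod).rank

/-- The dimension vector `α` as an integer vector. -/
noncomputable def alZ (S : Setup) : V S → ℤ := fun a => (alN S a : ℤ)

/-- The parameter `λ ∈ ℂ^{Q₀}`. -/
noncomputable def lam (S : Setup) : V S → ℂ
  | .inl ⟨i, j⟩ =>
      if h : i.1 = 0 then
        (- S.xi 0 (Fin.cast (by rw [h]) j) ⟨0, S.he 0 (Fin.cast (by rw [h]) j)⟩)
          - ∑ i' ∈ Finset.univ.filter (fun i' : Fin (S.p+1) => ¬ Iirr S i'),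
              S.xi i' ⟨0, S.hm i'⟩ ⟨0, S.he i' ⟨0, S.hm i'⟩⟩
      else - S.xi i.1 j ⟨0, S.he i.1 j⟩
  | .inr ⟨i, j, κ⟩ =>
      S.xi i j ⟨(κ : ℕ), by have := κ.2; omega⟩
        - S.xi i j ⟨(κ : ℕ) + 1, by have := κ.2; omega⟩

/-- Pairing `β · μ = Σ_a β_a μ_a` between `ℤ^{Q₀}` and `ℂ^{Q₀}`. -/
noncomputable def dotC (S : Setup) (β : V S → ℤ) (μ : V S → ℂ) : ℂ :=
  ∑ a : V S, (β a : ℂ) * μ a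

/-- `β ∈ R̃⁺_μ` : positive roots of `Q` lying in `L` with `β·μ = 0`. -/
def inRt (S : Setup) (μ : V S → ℂ) (β : V S → ℤ) : Prop :=
  isPosRoot S β ∧ inL S β ∧ dotC S β μ = 0

/-- `β ∈ ℕR̃⁺_μ` : finite sums (including `0`) of elements of `R̃⁺_μ`. -/
def inNRt (S : Setup) (μ : V S → ℂ) (β : V S → ℤ) : Prop :=
  ∃ (r : ℕ) (γ : Fin r → (V S → ℤ)), (∀ t, inRt S μ (γ t)) ∧ β = ∑ t, γ t

/-- `β ∈ Σ̃_μ`. -/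
def inSig (S : Setup) (μ : V S → ℂ) (β : V S → ℤ) : Prop :=
  inRt S μ β ∧ ∀ (r : ℕ), 2 ≤ r → ∀ γ : Fin r → (V S → ℤ),
    (∀ t, inRt S μ (γ t)) → β = ∑ t, γ t → (∑ t, pform S (γ t)) < pform S β

/-! ### The matrix side: truncated orbits.

An element `Σ_{j=1}^{k} A_j x^{-j}` of `𝔤_k*` is encoded as the polynomial matrix
`Σ_{j=1}^{k} A_j x^{k-j}` (of degree `< k`); the coadjoint `G_k`-action becomes
conjugation modulo `x^k` by polynomial matrices with invertible constant term. -/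

abbrev PMat (S : Setup) := Matrix (Fin S.n) (Fin S.n) (Polynomial ℂ)

/-- All entries have degree `< k`. -/
def degLT (S : Setup) (k : ℕ) (A : PMat S) : Prop :=
  ∀ a b, (A a b).degree < (k : ℕ)

/-- The HTL normal form `B⁽ⁱ⁾`, in the polynomial encoding. -/
noncomputable def Bmat (S : Setup) (i : Fin (S.p+1)) : PMat S :=
  Matrix.of fun a b =>
    if h : ((S.emb i).symm a).1 = ((S.emb i).symm b).1 then
      (if Fin.cast (by rw [h]) ((S.emb i).symm a).2 = ((S.emb i).symm b).2 then
          Polynomial.reflect (S.kk i) (S.q i ((S.emb i).symm b).1)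
        else 0)
        + Polynomial.C
            (S.R i ((S.emb i).symm b).1 (Fin.cast (by rw [h]) ((S.emb i).symm a).2)
              ((S.emb i).symm b).2)
          * Polynomial.X ^ (S.kk i - 1)
    else 0

/-- Membership in the truncated orbit `𝒪_{B⁽ⁱ⁾}`. -/
def inOrbit (S : Setup) (i : Fin (S.p+1)) (A : PMat S) : Prop :=
  degLT S (S.kk i) A ∧
  ∃ g : PMat S, IsUnit (g.map fun r => r.coeff 0) ∧
    ∀ a b, (Polynomial.X ^ (S.kk i) : Polynomial ℂ) ∣ (g * Bmat S i - A * g) a b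

/-- The residue matrix `A⁽ⁱ⁾₁`. -/
def resMat (S : Setup) (i : Fin (S.p+1)) (A : PMat S) : Matrix (Fin S.n) (Fin S.n) ℂ :=
  Matrix.of fun a b => (A a b).coeff (S.kk i - 1)

/-- `(A⁽ⁱ⁾)_{0≤i≤p} ∈ ∏ 𝒪_{B⁽ⁱ⁾}` with `Σ A⁽ⁱ⁾₁ = 0`. -/
def isDSElem (S : Setup) (A : ∀ _ : Fin (S.p+1), PMat S) : Prop :=
  (∀ i, inOrbit S i (A i)) ∧ (∑ i, resMat S i (A i)) = 0

/-- Irreducibility of the collection of all coefficient matrices `A⁽ⁱ⁾_j`. -/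
def irredTuple (S : Setup) (A : ∀ _ : Fin (S.p+1), PMat S) : Prop :=
  ∀ W : Submodule ℂ (Fin S.n → ℂ),
    (∀ (i : Fin (S.p+1)) (l : ℕ), ∀ v ∈ W,
        (Matrix.of fun a b => (A i a b).coeff l).mulVec v ∈ W) →
    W = ⊥ ∨ W = ⊤

/-! ### Representations of the double quiver -/

/-- A representation of the double quiver `Q̄` with dimension vector `β`:
`f a b ρ` is the matrix of `ψ_ρ : ℂ^{β a} → ℂ^{β b}` and `g a b ρ` the matrix of
`ψ_{ρ*} : ℂ^{β b} → ℂ^{β a}`, for the `ρ`-th arrow `a → b` of `Q`. -/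
structure Rep (S : Setup) (β : V S → ℕ) where
  f : ∀ a b : V S, Fin (arr S a b) → Matrix (Fin (β b)) (Fin (β a)) ℂ
  g : ∀ a b : V S, Fin (arr S a b) → Matrix (Fin (β a)) (Fin (β b)) ℂ

/-- The moment map at a vertex `c`. -/
noncomputable def moment (S : Setup) {β : V S → ℕ} (M : Rep S β) (c : V S) :
    Matrix (Fin (β c)) (Fin (β c)) ℂ :=
  (∑ a : V S, ∑ ρ : Fin (arr S a c), M.f a c ρ * M.g a c ρ)
    - ∑ b : V S, ∑ ρ : Fin (arr S c b), M.g c b ρ * M.f c b ρ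

/-- `M ∈ Rep(Q̄,β)_μ`. -/
def onMu (S : Setup) {β : V S → ℕ} (μ : V S → ℂ) (M : Rep S β) : Prop :=
  ∀ c : V S, moment S M c = μ c • (1 : Matrix (Fin (β c)) (Fin (β c)) ℂ)

/-- The block matrix `(ψ_{ρ^{[0,j]}_{[i,j']}})_{j,j'}` for `i ∈ I_irr ∖ {0}`. -/
noncomputable def crossMat (S : Setup) {β : V S → ℕ} (M : Rep S β)
    (i : {i : Fin (S.p+1) // Iirr S i}) :
    Matrix (Σ j' : Fin (S.m i.1), Fin (β (vI S i j'))) (Σ j : Fin (S.m 0), Fin (β (v0 S j))) ℂ :=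
  Matrix.of fun x y =>
    if h : 0 < arr S (v0 S y.1) (vI S i x.1) then
      M.f (v0 S y.1) (vI S i x.1) ⟨0, h⟩ x.2 y.2
    else 0

/-- All the block matrices `(ψ_{ρ^{[0,j]}_{[i,j']}})` for `i ∈ I_irr ∖ {0}` are invertible. -/
def crossBij (S : Setup) {β : V S → ℕ} (M : Rep S β) : Prop :=
  ∀ i : {i : Fin (S.p+1) // Iirr S i}, i.1 ≠ 0 →
    Function.Bijective ((crossMat S M i).mulVec)

/-- The combined map `(ψ_{ρ^{[i,1,1]}_{[0,j]}})_j : ℂ^{β [i,1,1]} → ⊕_j ℂ^{β [0,j]}`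
(for `i ∈ I_reg`). -/
noncomputable def regMatF (S : Setup) {β : V S → ℕ} (M : Rep S β)
    (i : Fin (S.p+1)) (j : Fin (S.m i)) (κ : Fin (S.e i j - 1)) :
    Matrix (Σ j' : Fin (S.m 0), Fin (β (v0 S j'))) (Fin (β (Sum.inr ⟨i, j, κ⟩))) ℂ :=
  Matrix.of fun x y =>
    if h : 0 < arr S (Sum.inr ⟨i, j, κ⟩) (v0 S x.1) then
      M.f (Sum.inr ⟨i, j, κ⟩) (v0 S x.1) ⟨0, h⟩ x.2 y
    else 0

/-- The combined map `(ψ_{(ρ^{[i,1,1]}_{[0,j]})*})_j : ⊕_j ℂ^{β [0,j]} → ℂ^{β [i,1,1]}`. -/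
noncomputable def regMatG (S : Setup) {β : V S → ℕ} (M : Rep S β)
    (i : Fin (S.p+1)) (j : Fin (S.m i)) (κ : Fin (S.e i j - 1)) :
    Matrix (Fin (β (Sum.inr ⟨i, j, κ⟩))) (Σ j' : Fin (S.m 0), Fin (β (v0 S j'))) ℂ :=
  Matrix.of fun y x =>
    if h : 0 < arr S (Sum.inr ⟨i, j, κ⟩) (v0 S x.1) then
      M.g (Sum.inr ⟨i, j, κ⟩) (v0 S x.1) ⟨0, h⟩ y x.2
    else 0

/-- `M ∈ Rep(Q̄,β)_μ^{dif}` (the open conditions). -/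
def difCond (S : Setup) {β : V S → ℕ} (M : Rep S β) : Prop :=
  crossBij S M ∧
  (∀ (i : Fin (S.p+1)), ¬ Iirr S i → ∀ (j : Fin (S.m i)) (κ : Fin (S.e i j - 1)),
      (κ : ℕ) = 0 →
      Function.Injective ((regMatF S M i j κ).mulVec) ∧
      Function.Surjective ((regMatG S M i j κ).mulVec)) ∧
  (∀ (i : Fin (S.p+1)) (j : Fin (S.m i)) (κ : Fin (S.e i j - 1)) (b : V S)
      (ρ : Fin (arr S (Sum.inr ⟨i, j, κ⟩) b)),
      (¬ Iirr S i ∧ (κ : ℕ) = 0) ∨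
      (Function.Injective ((M.f (Sum.inr ⟨i, j, κ⟩) b ρ).mulVec) ∧
       Function.Surjective ((M.g (Sum.inr ⟨i, j, κ⟩) b ρ).mulVec)))

/-- A family of subspaces forming a subrepresentation of `M`. -/
def isSubrep (S : Setup) {β : V S → ℕ} (M : Rep S β)
    (W : ∀ a : V S, Submodule ℂ (Fin (β a) → ℂ)) : Prop :=
  ∀ (a b : V S) (ρ : Fin (arr S a b)),
    (∀ v ∈ W a, (M.f a b ρ).mulVec v ∈ W b) ∧ (∀ v ∈ W b, (M.g a b ρ).mulVec v ∈ W a)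

/-- Irreducibility of a representation. -/
def irredRep (S : Setup) {β : V S → ℕ} (M : Rep S β) : Prop :=
  ∀ W, isSubrep S M W → (∀ a, W a = ⊥) ∨ (∀ a, W a = ⊤)

/-- A dimension vector is balanced if `Σ_j γ_[0,j] = Σ_j γ_[i,j]` for all `i ∈ I_irr∖{0}`. -/
def balanced (S : Setup) (γ : V S → ℕ) : Prop :=
  ∀ i : {i : Fin (S.p+1) // Iirr S i}, i.1 ≠ 0 →
    (∑ j : Fin (S.m 0), γ (v0 S j)) = ∑ j : Fin (S.m i.1), γ (vI S i j)

/-- Quasi-irreducibility: no nontrivial proper subrepresentation with balanced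
dimension vector. -/
def quasiIrred (S : Setup) {β : V S → ℕ} (M : Rep S β) : Prop :=
  ∀ W, isSubrep S M W → balanced S (fun a => Module.finrank ℂ (W a)) →
    (∀ a, W a = ⊥) ∨ (∀ a, W a = ⊤)

/-- Simultaneous conjugation of representations by `∏_a GL(β_a, ℂ)`. -/
def repConj (S : Setup) {β : V S → ℕ} (M N : Rep S β) : Prop :=
  ∃ g : ∀ a : V S, (Matrix (Fin (β a)) (Fin (β a)) ℂ)ˣ,
    (∀ a b ρ, N.f a b ρ = ((g b).val * M.f a b ρ) * ((g a)⁻¹).val) ∧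
    (∀ a b ρ, N.g a b ρ = ((g a).val * M.g a b ρ) * ((g b)⁻¹).val)

/-- Simultaneous conjugation of tuples by `GL(n, ℂ)`. -/
def tupConj (S : Setup) (A A' : ∀ _ : Fin (S.p+1), PMat S) : Prop :=
  ∃ g : (Matrix (Fin S.n) (Fin S.n) ℂ)ˣ,
    ∀ i, A' i = (g.val.map Polynomial.C) * A i * ((g⁻¹).val.map Polynomial.C)

/-- Carrier of the moduli space `ℳ*_{st}(𝐁)`. -/
abbrev MstC (S : Setup) := {A : ∀ _ : Fin (S.p+1), PMat S // isDSElem S A ∧ irredTuple S A}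

/-- The moduli space `ℳ*_{st}(𝐁)` of stable connections, identified with conjugacy
classes of irreducible elements of `∏ 𝒪_{B⁽ⁱ⁾}` with vanishing residue sum. -/
abbrev Mst (S : Setup) := Quot (fun A A' : MstC S => tupConj S A.1 A'.1)

abbrev DSC (S : Setup) := {A : ∀ _ : Fin (S.p+1), PMat S // isDSElem S A}

abbrev DSQ (S : Setup) := Quot (fun A A' : DSC S => tupConj S A.1 A'.1)

abbrev RepIrrC (S : Setup) (μ : V S → ℂ) :=
  {M : Rep S (alN S) // onMu S μ M ∧ irredRep S M}

/-- The quiver variety `𝔐^{reg}_μ(Q,α)`. -/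
abbrev Mreg (S : Setup) (μ : V S → ℂ) :=
  Quot (fun M N : RepIrrC S μ => repConj S M.1 N.1)

abbrev DifC (S : Setup) (μ : V S → ℂ) :=
  {M : Rep S (alN S) // onMu S μ M ∧ difCond S M}

abbrev DifQ (S : Setup) (μ : V S → ℂ) :=
  Quot (fun M N : DifC S μ => repConj S M.1 N.1)

abbrev QIC (S : Setup) (μ : V S → ℂ) :=
  {M : Rep S (alN S) // onMu S μ M ∧ quasiIrred S M ∧ crossBij S M}

abbrev QIQ (S : Setup) (μ : V S → ℂ) :=
  Quot (fun M N : QIC S μ => repConj S M.1 N.1)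

/-! ### `J`, `ε_𝐢`, and the equivalence relation `∼` -/

/-- `ε_𝐢 = Σ_{i ∈ I_irr} ε_{[i,j_i]}` for `𝐢 = ([i,j_i]) ∈ 𝒥`. -/
def epsJ (S : Setup) (I : ∀ i : Fin (S.p+1), Fin (S.m i)) : V S → ℤ
  | .inl ⟨i, j⟩ => if (j : ℕ) = (I i.1 : ℕ) then 1 else 0
  | .inr _ => 0

/-- The reflection `s_𝐢`. -/
def sJ (S : Setup) (I : ∀ i : Fin (S.p+1), Fin (S.m i)) (β : V S → ℤ) : V S → ℤ :=
  fun b => β b - bform S β (epsJ S I) * epsJ S I b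

/-- The quasi-fundamental set `F̃`. -/
def quasiFund (S : Setup) (β : V S → ℤ) : Prop :=
  inL S β ∧ (∀ a, 0 ≤ β a) ∧ β ≠ 0 ∧
  (∀ I : ∀ i : Fin (S.p+1), Fin (S.m i), bform S β (epsJ S I) ≤ 0) ∧
  (∀ (i : Fin (S.p+1)) (j : Fin (S.m i)) (κ : Fin (S.e i j - 1)),
      bform S β (eps S (Sum.inr ⟨i, j, κ⟩)) ≤ 0) ∧
  connSupp S β

/-- `μ_𝐢 = Σ_{i ∈ I_irr} μ_{[i,j_i]}`. -/
noncomputable def muJ (S : Setup) (I : ∀ i : Fin (S.p+1), Fin (S.m i)) (μ : V S → ℂ) : ℂ :=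
  ∑ i : {i : Fin (S.p+1) // Iirr S i}, μ (vI S i (I i.1))

/-- The transformed parameter `μ'` in the move `s_𝐢` on pairs. -/
noncomputable def muMove (S : Setup) (I : ∀ i : Fin (S.p+1), Fin (S.m i)) (μ : V S → ℂ) :
    V S → ℂ := fun a =>
  match a with
  | .inl ⟨i, j⟩ =>
      if i.1 = 0 ∧ (j : ℕ) = (I 0 : ℕ) then μ a - 2 * muJ S I μ else μ a
  | .inr ⟨i, j, κ⟩ =>
      if j = I i ∧ (κ : ℕ) = 0 then μ a + muJ S I μ else μ a

/-- The reflected parameter `r_a(μ)` for a vertex `a`. -/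
noncomputable def rvtx (S : Setup) (a : V S) (μ : V S → ℂ) : V S → ℂ :=
  fun b => μ b - ((bform S (eps S a) (eps S b) : ℤ) : ℂ) * μ a

/-- One move generating the relation `∼` on pairs `(β,μ)`. -/
def stepRel (S : Setup) :
    ((V S → ℤ) × (V S → ℂ)) → ((V S → ℤ) × (V S → ℂ)) → Prop := fun x y =>
  (∃ (i : Fin (S.p+1)) (j : Fin (S.m i)) (κ : Fin (S.e i j - 1)),
      x.2 (Sum.inr ⟨i, j, κ⟩) ≠ 0 ∧
      y = (refl1 S (Sum.inr ⟨i, j, κ⟩) x.1, rvtx S (Sum.inr ⟨i, j, κ⟩) x.2)) ∨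
  (∃ I : ∀ i : Fin (S.p+1), Fin (S.m i),
      muJ S I x.2 ≠ 0 ∧ y = (sJ S I x.1, muMove S I x.2))

/-- The smallest equivalence relation `∼` containing all the moves. -/
def pairEquiv (S : Setup) :
    ((V S → ℤ) × (V S → ℂ)) → ((V S → ℤ) × (V S → ℂ)) → Prop :=
  Relation.EqvGen (stepRel S)

/-- The vector `z^{(i₀)}` for `i₀ ∈ I_irr ∖ {0}`. -/
def zvec (S : Setup) (i' : Fin (S.p+1)) : V S → ℂ
  | .inl ⟨i, _⟩ => if i.1 = i' then 1 else if i.1 = 0 then -1 else 0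
  | .inr _ => 0

/-! ### Abstract reflection groups of symmetric generalized Cartan matrices -/

section Abstract

variable {X : Type} [Fintype X] [DecidableEq X]

/-- The bilinear form of a matrix. -/
def gform (B : X → X → ℤ) (β γ : X → ℤ) : ℤ := ∑ a, ∑ b, β a * γ b * B a b

/-- Coordinate vectors. -/
def E (a : X) : X → ℤ := fun b => if b = a then 1 else 0

/-- Symmetric generalized Cartan matrices. -/
structure GCM (B : X → X → ℤ) : Prop where
  symm : ∀ a b, B a b = B b a
  diag : ∀ a, B a a = 2
  off : ∀ a b, a ≠ b → B a b ≤ 0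

theorem gform_E (B : X → X → ℤ) (β : X → ℤ) (a : X) :
    gform B β (E a) = ∑ b, β b * B b a := by
  simp [gform, E]

theorem gform_add_left (B : X → X → ℤ) (β β' γ : X → ℤ) :
    gform B (β + β') γ = gform B β γ + gform B β' γ := by
  simp [gform, add_mul, Finset.sum_add_distrib]

theorem gform_smul_left (B : X → X → ℤ) (c : ℤ) (β γ : X → ℤ) :
    gform B (c • β) γ = c * gform B β γ := by
  simp [gform, Finset.mul_sum, mul_assoc]

theorem gform_symm {B : X → X → ℤ} (h : GCM B) (β γ : X → ℤ) :
    gform B β γ = gform B γ β := by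
  unfold gform
  rw [Finset.sum_comm]
  refine Finset.sum_congr rfl fun a _ => Finset.sum_congr rfl fun b _ => ?_
  rw [h.symm a b]; ring

theorem gform_add_right {B : X → X → ℤ} (h : GCM B) (γ β β' : X → ℤ) :
    gform B γ (β + β') = gform B γ β + gform B γ β' := by
  rw [gform_symm h, gform_add_left, gform_symm h β, gform_symm h β']

theorem gform_smul_right {B : X → X → ℤ} (h : GCM B) (c : ℤ) (γ β : X → ℤ) :
    gform B γ (c • β) = c * gform B γ β := by
  rw [gform_symm h, gform_smul_left, gform_symm h β]

theorem gform_eq_sum (B : X → X → ℤ) (β γ : X → ℤ) :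
    gform B β γ = ∑ b, γ b * gform B β (E b) := by
  simp only [gform_E, Finset.mul_sum]
  unfold gform
  rw [Finset.sum_comm]
  refine Finset.sum_congr rfl fun a _ => Finset.sum_congr rfl fun b _ => ?_
  ring

theorem gform_EE (B : X → X → ℤ) (a b : X) : gform B (E a) (E b) = B a b := by
  rw [gform_E]; simp [E]

/-- The simple reflection. -/
def rfx (B : X → X → ℤ) (a : X) : Module.End ℤ (X → ℤ) where
  toFun β := β - gform B β (E a) • E a
  map_add' β γ := by rw [gform_add_left, add_smul]; abel
  map_smul' c β := by
    rw [gform_smul_left, mul_smul, RingHom.id_apply, smul_sub]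

theorem rfx_apply (B : X → X → ℤ) (a : X) (β : X → ℤ) :
    rfx B a β = β - gform B β (E a) • E a := rfl

theorem rfx_coord (B : X → X → ℤ) (a b : X) (β : X → ℤ) (h : b ≠ a) :
    rfx B a β b = β b := by
  simp [rfx_apply, E, h]

theorem rfx_self (B : X → X → ℤ) (a : X) (β : X → ℤ) :
    rfx B a β a = β a - gform B β (E a) := by
  simp [rfx_apply, E]

theorem gform_rfx {B : X → X → ℤ} (h : GCM B) (a : X) (β γ : X → ℤ) :
    gform B (rfx B a β) (rfx B a γ) = gform B β γ := by
  simp only [rfx_apply, sub_eq_add_neg, ← neg_smul]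
  rw [gform_add_left, gform_add_right h, gform_add_right h, gform_smul_left, gform_smul_left,
    gform_smul_right h, gform_smul_right h, gform_EE, h.diag, gform_symm h (E a) γ]
  ring

theorem rfx_rfx {B : X → X → ℤ} (h : GCM B) (a : X) (β : X → ℤ) :
    rfx B a (rfx B a β) = β := by
  funext b
  by_cases hb : b = a
  · subst hb
    have : gform B (rfx B b β) (E b) = - gform B β (E b) := by
      rw [rfx_apply, sub_eq_add_neg, ← neg_smul, gform_add_left, gform_smul_left, gform_EE, h.diag]
      ring
    rw [rfx_self, rfx_self, this]
    ring
  · rw [rfx_coord _ _ _ _ hb, rfx_coord _ _ _ _ hb]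

theorem rfx_mul_self {B : X → X → ℤ} (h : GCM B) (a : X) : rfx B a * rfx B a = 1 :=
  LinearMap.ext fun β => rfx_rfx h a β

theorem rfx_E (B : X → X → ℤ) (a b : X) : rfx B a (E b) = E b - B b a • E a := by
  rw [rfx_apply, gform_EE]

/-- The action of a word. -/
def act (B : X → X → ℤ) (l : List X) : Module.End ℤ (X → ℤ) := (l.map (rfx B)).prod

@[simp] theorem act_nil (B : X → X → ℤ) : act B [] = 1 := rfl

@[simp] theorem act_cons (B : X → X → ℤ) (a : X) (l : List X) :
    act B (a :: l) = rfx B a * act B l := by simp [act]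

@[simp] theorem act_append (B : X → X → ℤ) (l l' : List X) :
    act B (l ++ l') = act B l * act B l' := by simp [act]

theorem act_reverse {B : X → X → ℤ} (h : GCM B) (l : List X) :
    act B l.reverse * act B l = 1 := by
  induction l with
  | nil => simp
  | cons a l ih =>
    rw [List.reverse_cons, act_append, act_cons, act_cons, act_nil, mul_one,
      mul_assoc, ← mul_assoc (rfx B a), rfx_mul_self h, one_mul, ih]

theorem gform_act {B : X → X → ℤ} (h : GCM B) (l : List X) (β γ : X → ℤ) :
    gform B (act B l β) (act B l γ) = gform B β γ := by
  induction l with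
  | nil => simp
  | cons a l ih =>
    rw [act_cons, Module.End.mul_apply, Module.End.mul_apply, gform_rfx h, ih]

/-- Rank two positivity. -/
theorem rank2 {B : X → X → ℤ} (h : GCM B) (s t : X) (hst : s ≠ t) (x : List X)
    (hx : ∀ a ∈ x, a = s ∨ a = t)
    (hred : ∀ y : List X, act B y = act B x → x.length ≤ y.length)
    (hred' : ∀ y : List X, act B y = act B (x ++ [s]) → x.length ≤ y.length) :
    ∃ p q : ℤ, 0 ≤ p ∧ 0 ≤ q ∧ act B x (E s) = p • E s + q • E t ∧
      (B s t ≤ -2 → (x.head? = some t → p ≤ q) ∧ (x.head? = some s → q ≤ p) ∧ 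
        (x = [] → q ≤ p)) ∧
      (B s t = 0 → x = [] ∨ x = [t]) ∧
      (B s t = -1 → x = [] ∨ x = [t] ∨ x = [s, t]) := by
  have hBst := h.off s t hst
  have hts := h.symm s t
  induction x with
  | nil => exact ⟨1, 0, by norm_num, by norm_num, by simp, by simp, by simp, by simp⟩
  | cons a x ih =>
    obtain ⟨p, q, hp, hq, he, h2, h0, h1⟩ := ih (fun b hb => hx b (by simp [hb]))
      (fun y hy => by
        have := hred (a :: y) (by rw [act_cons, act_cons, hy])
        simpa using this)
      (fun y hy => by
        have := hred' (a :: y) (by rw [act_cons, List.cons_append, act_cons, hy])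
        simpa using this)
    -- the head letter of the tail differs from the new letter
    have hhead : x.head? ≠ some a := by
      intro hh
      obtain ⟨x', rfl⟩ : ∃ x', x = a :: x' := by
        cases x with
        | nil => simp at hh
        | cons b x' => simp at hh; exact ⟨x', by rw [hh]⟩
      have := hred x' (by rw [act_cons, act_cons, ← mul_assoc, rfx_mul_self h, one_mul])
      simp at this
    have hsE : rfx B s (E s) = - E s := by
      rw [rfx_E, h.diag]; funext b; simp; ring
    have htE : rfx B t (E t) = - E t := by
      rw [rfx_E, h.diag]; funext b; simp; ring
    rcases hx a (by simp) with rfl | rfl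
    · -- a = s
      have hxne : x ≠ [] := by
        rintro rfl
        have := hred' [] (by simp [rfx_mul_self h])
        simp at this
      have hxt : x.head? = some t := by
        cases x with
        | nil => exact absurd rfl hxne
        | cons b x' =>
          rcases hx b (by simp) with rfl | rfl
          · simp at hhead
          · rfl
      have hcomp : act B (a :: x) (E a) = (-p - B a t * q) • E a + q • E t := by
        rw [act_cons, Module.End.mul_apply, he, map_add, map_smul, map_smul, hsE, rfx_E, ← hts]
        funext b; simp; ring
      by_cases c0 : B a t = 0
      · exfalso
        have hx1 : x = [t] := (h0 c0).resolve_left hxne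
        subst hx1
        -- s t s = t
        have hcomm : rfx B a * rfx B t = rfx B t * rfx B a := by
          refine LinearMap.ext fun β => ?_
          simp only [Module.End.mul_apply, rfx_apply, sub_eq_add_neg, ← neg_smul]
          rw [gform_add_left, gform_smul_left, gform_add_left, gform_smul_left, gform_EE,
            gform_EE, ← hts, c0]
          funext b; simp; ring
        have := hred' [t] (by
          simp [mul_assoc]
          rw [← hcomm, ← mul_assoc, rfx_mul_self h, one_mul])
        simp at this
      by_cases c1 : B a t = -1
      · rcases h1 c1 with hx1 | hx1 | hx1
        · exact absurd hx1 hxne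
        · subst hx1
          have hpq : p = 1 ∧ q = 1 := by
            have e1 := congrFun he a
            have e2 := congrFun he t
            simp [rfx_E, E, hst, hst.symm, c1] at e1 e2
            exact ⟨e1.symm, e2.symm⟩
          refine ⟨0, 1, by norm_num, by norm_num, ?_, by omega, by omega, by simp⟩
          rw [hcomp, hpq.1, hpq.2, c1]; simp
        · subst hx1
          simp [hst] at hxt
      · have hle : B a t ≤ -2 := by omega
        have hpq := (h2 hle).1 hxt
        refine ⟨-p - B a t * q, q, by nlinarith, hq, hcomp, ?_, by omega, by omega⟩
        intro _
        refine ⟨by simp [hst], fun _ => by nlinarith, by simp⟩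
    · -- a = t
      have hcomp : act B (a :: x) (E s) = p • E s + (-q - B s a * p) • E a := by
        rw [act_cons, Module.End.mul_apply, he, map_add, map_smul, map_smul, htE, rfx_E]
        funext b; simp; ring
      have hxs : x = [] ∨ x.head? = some s := by
        cases x with
        | nil => left; rfl
        | cons b x' =>
          rcases hx b (by simp) with rfl | rfl
          · right; rfl
          · simp at hhead
      by_cases c0 : B s a = 0
      · rcases h0 c0 with hx1 | hx1
        · subst hx1
          refine ⟨1, 0, by norm_num, by norm_num, ?_, by omega, by simp, by omega⟩
          simp [rfx_E, c0]
        · subst hx1; simp at hhead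
      by_cases c1 : B s a = -1
      · rcases h1 c1 with hx1 | hx1 | hx1
        · subst hx1
          refine ⟨1, 1, by norm_num, by norm_num, ?_, by omega, by omega, by simp⟩
          simp [rfx_E, c1]
        · subst hx1; simp at hhead
        · exfalso
          subst hx1
          -- t s t s = s t
          have hbraid : rfx B a * rfx B s * rfx B a = rfx B s * rfx B a * rfx B s := by
            refine LinearMap.ext fun β => ?_
            simp only [Module.End.mul_apply, rfx_apply, sub_eq_add_neg, ← neg_smul]
            simp only [gform_add_left, gform_smul_left, gform_EE, ← hts, c1, h.diag]
            funext b; simp; ring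
          have := hred' [s, a] (by
            simp only [List.cons_append, List.nil_append, act_cons, act_nil, mul_one]
            rw [← mul_assoc, ← mul_assoc, hbraid, mul_assoc, rfx_mul_self h, mul_one])
          simp at this
      · have hle : B s a ≤ -2 := by omega
        have hpq : q ≤ p := by
          rcases hxs with hh | hh
          · exact (h2 hle).2.2 hh
          · exact (h2 hle).2.1 hh
        refine ⟨p, -q - B s a * p, hp, by nlinarith, hcomp, ?_, by omega, by omega⟩
        intro _
        refine ⟨fun _ => by nlinarith, by simp [hst.symm], by simp⟩

/-- The main positivity theorem for words. -/
theorem pos_of_len {B : X → X → ℤ} (h : GCM B) : ∀ (N : ℕ) (l : List X), l.length = N →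
    (∀ l' : List X, act B l' = act B l → l.length ≤ l'.length) → ∀ s : X,
    (∀ l' : List X, act B l' = act B (l ++ [s]) → l.length ≤ l'.length) →
    0 ≤ act B l (E s) := by
  intro N
  induction N using Nat.strong_induction_on with
  | _ N ih =>
  intro l hl hred s hs
  rcases List.eq_nil_or_concat' l with rfl | ⟨l₁, t, rfl⟩
  · intro b; simp [E]; split_ifs <;> simp
  have hst : s ≠ t := by
    rintro rfl
    have := hs l₁ (by simp [mul_assoc, rfx_mul_self h])
    simp at this
  set l := l₁ ++ [t] with hldef
  -- decompositions
  let P : ℕ → Prop := fun k => ∃ v x : List X, v.length = k ∧ (∀ a ∈ x, a = s ∨ a = t) ∧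
    act B (v ++ x) = act B l ∧ v.length + x.length = l.length
  have hP : ∃ k, P k := ⟨l₁.length, l₁, [t], rfl, by simp, rfl, by simp [hldef]⟩
  classical
  obtain ⟨v, x, hv, hx, hvx, hlen⟩ := Nat.find_spec hP
  have hmin : ∀ m, m < v.length → ¬ P m := fun m hm => Nat.find_min hP (by omega)
  have hvlt : v.length < N := by
    have : v.length ≤ l₁.length := by
      rw [hv]
      exact Nat.find_min' hP ⟨l₁, [t], rfl, by simp, rfl, by simp [hldef]⟩
    have h2 : l.length = l₁.length + 1 := by simp [hldef]
    omega
  have hvred : ∀ l' : List X, act B l' = act B v → v.length ≤ l'.length := by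
    intro l' hl'
    have := hred (l' ++ x) (by rw [act_append, hl', ← act_append, hvx])
    simp at this; omega
  have hup : ∀ u : X, (u = s ∨ u = t) →
      ∀ l' : List X, act B l' = act B (v ++ [u]) → v.length ≤ l'.length := by
    intro u hu l' hl'
    by_contra hlt
    push Not at hlt
    have he : act B (l' ++ u :: x) = act B l := by
      rw [act_append, hl', act_append, act_cons, act_cons, act_nil, mul_one, mul_assoc,
        ← mul_assoc (rfx B u), rfx_mul_self h, one_mul, ← act_append, hvx]
    have := hred _ he
    refine hmin l'.length hlt ⟨l', u :: x, rfl, ?_, he, ?_⟩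
    · intro a ha
      rcases List.mem_cons.1 ha with rfl | ha
      · exact hu
      · exact hx a ha
    · simp at this ⊢; omega
  have hvs := ih v.length hvlt v rfl hvred s (hup s (Or.inl rfl))
  have hvt := ih v.length hvlt v rfl hvred t (hup t (Or.inr rfl))
  obtain ⟨p, q, hp, hq, he, -⟩ := rank2 h s t hst x hx
    (fun y hy => by
      have := hred (v ++ y) (by rw [act_append, hy, ← act_append, hvx])
      simp at this; omega)
    (fun y hy => by
      have := hs (v ++ y) (by
        rw [act_append, hy, act_append, ← mul_assoc, ← act_append, hvx, ← act_append])
      simp only [List.length_append] at this hlen; omega)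
  rw [← hvx, act_append, Module.End.mul_apply, he, map_add, map_smul, map_smul]
  intro b
  have h1 := hvs b
  have h2 := hvt b
  simp at h1 h2 ⊢
  positivity

theorem exists_min_word (B : X → X → ℤ) (w : Module.End ℤ (X → ℤ)) (hw : ∃ l, act B l = w) :
    ∃ l, act B l = w ∧ ∀ l', act B l' = w → l.length ≤ l'.length := by
  classical
  have hP : ∃ k, ∃ l, act B l = w ∧ l.length = k := by
    obtain ⟨l, hl⟩ := hw; exact ⟨_, l, hl, rfl⟩
  obtain ⟨l, hl, hk⟩ := Nat.find_spec hP
  exact ⟨l, hl, fun l' hl' => by rw [hk]; exact Nat.find_min' hP ⟨l', hl', rfl⟩⟩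

theorem sign_coherent {B : X → X → ℤ} (h : GCM B) (l : List X) (s : X) :
    0 ≤ act B l (E s) ∨ act B l (E s) ≤ 0 := by
  obtain ⟨m, hm, hmin⟩ := exists_min_word B (act B l) ⟨l, rfl⟩
  obtain ⟨k, hk, hkmin⟩ := exists_min_word B (act B (l ++ [s])) ⟨_, rfl⟩
  by_cases hle : m.length ≤ k.length
  · left
    rw [← hm]
    refine pos_of_len h _ m rfl (fun l' hl' => hmin l' (by rw [hl', hm])) s fun l' hl' => ?_
    have := hkmin l' (by rw [hl', act_append, hm, ← act_append])
    omega
  · right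
    have hpos : 0 ≤ act B k (E s) := by
      refine pos_of_len h _ k rfl (fun l' hl' => hkmin l' (by rw [hl', hk])) s fun l' hl' => ?_
      have := hmin l' (by
        rw [hl', act_append, hk, act_append]; simp [mul_assoc, rfx_mul_self h])
      omega
    have : act B k (E s) = - act B l (E s) := by
      rw [hk, act_append, act_cons, act_nil, mul_one, Module.End.mul_apply, rfx_E, h.diag]
      rw [map_sub, map_smul]; funext b; simp; ring
    rw [this] at hpos
    exact neg_nonneg.1 hpos

/-- Real roots. -/
def isRR (B : X → X → ℤ) (α : X → ℤ) : Prop := ∃ l s, α = act B l (E s)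

theorem isRR_rfx {B : X → X → ℤ} {α : X → ℤ} (hα : isRR B α) (a : X) :
    isRR B (rfx B a α) := by
  obtain ⟨l, s, rfl⟩ := hα
  exact ⟨a :: l, s, by simp⟩

theorem isRR_E (B : X → X → ℤ) (a : X) : isRR B (E a) := ⟨[], a, by simp⟩

theorem isRR_norm {B : X → X → ℤ} (h : GCM B) {α : X → ℤ} (hα : isRR B α) :
    gform B α α = 2 := by
  obtain ⟨l, s, rfl⟩ := hα
  rw [gform_act h, gform_EE, h.diag]

theorem rfx_pos {B : X → X → ℤ} (h : GCM B) {α : X → ℤ} (hα : isRR B α) (h0 : 0 ≤ α) (a : X)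
    (hne : α ≠ E a) : 0 ≤ rfx B a α := by
  by_cases hc : ∃ c, c ≠ a ∧ α c ≠ 0
  · obtain ⟨c, hca, hc⟩ := hc
    obtain ⟨l, s, he⟩ := isRR_rfx hα a
    rcases sign_coherent h l s with hp | hp
    · rw [he]; exact hp
    · exfalso
      rw [← he] at hp
      have h1 := hp c
      have h2 := h0 c
      rw [rfx_coord _ _ _ _ hca] at h1
      simp at h1 h2
      omega
  · exfalso
    push Not at hc
    have he : α = α a • E a := by
      funext b
      by_cases hb : b = a
      · subst hb; simp [E]
      · simp [E, hb, hc b hb]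
    have hn := isRR_norm h hα
    rw [he, gform_smul_left, gform_smul_right h, gform_EE, h.diag] at hn
    have ha := h0 a
    simp at ha
    have : α a = 1 := by nlinarith
    rw [this, one_smul] at he
    exact hne he

/-- Descent to the antidominant chamber. -/
theorem descent {B : X → X → ℤ} (h : GCM B) {ι : Type} [Fintype ι] (N : ℤ) (hN : 0 < N)
    (c : ι → ℤ) (hc : ∀ s, 0 ≤ c s) : ∀ (m : ℕ) (β : X → ℤ) (α : ι → X → ℤ),
    (∑ a, β a ≤ m) →
    (∀ s, isRR B (α s)) → (∀ s, 0 ≤ α s) → (∀ s, gform B β (α s) ≤ 0) →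
    N • β = ∑ s, c s • α s →
    ∃ l : List X, 0 ≤ act B l β ∧ (∀ a, gform B (act B l β) (E a) ≤ 0) ∧
      ∀ s, isRR B (act B l (α s)) ∧ 0 ≤ act B l (α s) := by
  have hpos : ∀ (β : X → ℤ) (α : ι → X → ℤ), (∀ s, 0 ≤ α s) → N • β = ∑ s, c s • α s →
      0 ≤ β := by
    intro β α hα he b
    have := congrFun he b
    simp at this
    have h2 : 0 ≤ ∑ s, c s * α s b := Finset.sum_nonneg fun s _ => mul_nonneg (hc s) (hα s b)
    rw [← this] at h2
    exact nonneg_of_mul_nonneg_right h2 hN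
  intro m
  induction m with
  | zero =>
    intro β α hm hr hα hp he
    have hβ := hpos β α hα he
    have hβ0 : β = 0 := by
      have : ∑ a, β a = 0 := le_antisymm (by simpa using hm) (Finset.sum_nonneg fun a _ => hβ a)
      rw [Finset.sum_eq_zero_iff_of_nonneg (fun a _ => hβ a)] at this
      funext a; exact this a (Finset.mem_univ a)
    refine ⟨[], by simpa using hβ, fun a => ?_, fun s => by simpa using ⟨hr s, hα s⟩⟩
    subst hβ0; simp [gform]
  | succ m ih =>
    intro β α hm hr hα hp he
    by_cases hd : ∀ a, gform B β (E a) ≤ 0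
    · exact ⟨[], by simpa using hpos β α hα he, by simpa using hd,
        fun s => by simpa using ⟨hr s, hα s⟩⟩
    · push Not at hd
      obtain ⟨a, ha⟩ := hd
      have hsum : ∑ b, rfx B a β b ≤ m := by
        have : ∑ b, rfx B a β b = ∑ b, β b - gform B β (E a) := by
          simp [rfx_apply, E, Finset.sum_sub_distrib]
        rw [this]; push_cast at hm; omega
      obtain ⟨l, h1, h2, h3⟩ := ih (rfx B a β) (fun s => rfx B a (α s)) hsum
        (fun s => isRR_rfx (hr s) a)
        (fun s => rfx_pos h (hr s) (hα s) a (fun hh => by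
          have := hp s; rw [hh] at this; omega))
        (fun s => by rw [gform_rfx h]; exact hp s)
        (by rw [← map_smul, he, map_sum]; exact Finset.sum_congr rfl fun s _ => map_smul _ _ _)
      exact ⟨l ++ [a], by simpa using h1, by simpa using h2, by simpa using h3⟩

/-- Supports of positive real roots are connected. -/
theorem conn_RR {B : X → X → ℤ} (h : GCM B) : ∀ (m : ℕ) (α : X → ℤ), (∑ a, α a ≤ m) →
    isRR B α → 0 ≤ α → ∀ C : Set X,
    (∀ a b, α a ≠ 0 → α b ≠ 0 → a ∈ C → b ∉ C → B a b = 0) →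
    (∀ a, α a ≠ 0 → a ∈ C) ∨ (∀ a, α a ≠ 0 → a ∉ C) := by
  intro m
  induction m with
  | zero =>
    intro α hm hr h0 C _
    have : ∑ a, α a = 0 := le_antisymm (by simpa using hm) (Finset.sum_nonneg fun a _ => h0 a)
    rw [Finset.sum_eq_zero_iff_of_nonneg (fun a _ => h0 a)] at this
    left; intro a ha; exact absurd (this a (Finset.mem_univ a)) ha
  | succ m ih =>
    intro α hm hr h0 C hC
    by_cases hs : ∃ a, α = E a
    · obtain ⟨a, rfl⟩ := hs
      by_cases haC : a ∈ C
      · left; intro b hb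
        have : b = a := by by_contra hne; simp [E, hne] at hb
        rw [this]; exact haC
      · right; intro b hb
        have : b = a := by by_contra hne; simp [E, hne] at hb
        rw [this]; exact haC
    · push Not at hs
      have hn := isRR_norm h hr
      rw [gform_eq_sum] at hn
      obtain ⟨a, -, ha⟩ : ∃ a ∈ Finset.univ, 0 < α a * gform B α (E a) := by
        by_contra hcon
        push Not at hcon
        have := Finset.sum_nonpos hcon
        omega
      have haα : 0 < α a := by
        rcases (h0 a).lt_or_eq with hh | hh
        · exact hh
        · rw [← hh] at ha; simp at ha
      have hag : 0 < gform B α (E a) := by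
        exact (mul_pos_iff_of_pos_left haα).1 ha
      set α' := rfx B a α with hα'
      have h0' : 0 ≤ α' := rfx_pos h hr h0 a (hs a)
      have hsub : ∀ b, α' b ≠ 0 → α b ≠ 0 := by
        intro b hb
        by_cases hba : b = a
        · subst hba; omega
        · rwa [hα', rfx_coord _ _ _ _ hba] at hb
      have hsum : ∑ b, α' b = ∑ b, α b - gform B α (E a) := by
        simp [hα', rfx_apply, E, Finset.sum_sub_distrib]
      have hneg : gform B α' (E a) < 0 := by
        have : gform B α' (E a) = - gform B α (E a) := by
          rw [hα', rfx_apply, sub_eq_add_neg, ← neg_smul, gform_add_left, gform_smul_left,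
            gform_EE, h.diag]; ring
        omega
      rw [gform_E] at hneg
      obtain ⟨b, -, hb⟩ := Finset.exists_lt_of_sum_lt (s := Finset.univ)
        (f := fun b => α' b * B b a) (g := fun _ => (0 : ℤ)) (by simpa using hneg)
      have hb1 : α' b ≠ 0 := by intro hh; simp [hh] at hb
      have hb2 : B b a ≠ 0 := by intro hh; simp [hh] at hb
      have hrest : ∀ c, α c ≠ 0 → c ≠ a → α' c ≠ 0 := by
        intro c hc hca; rwa [hα', rfx_coord _ _ _ _ hca]
      rcases ih α' (by rw [hsum]; push_cast at hm; omega) (isRR_rfx hr a) h0' C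
        (fun x y hx hy => hC x y (hsub x hx) (hsub y hy)) with hl | hl
      · left
        have haC : a ∈ C := by
          by_contra haC
          exact hb2 (hC b a (hsub b hb1) haα.ne' (hl b hb1) haC)
        intro c hc
        by_cases hca : c = a
        · rw [hca]; exact haC
        · exact hl c (hrest c hc hca)
      · right
        have haC : a ∉ C := by
          intro haC
          exact hb2 (by rw [h.symm]; exact hC a b haα.ne' (hsub b hb1) haC (hl b hb1))
        intro c hc
        by_cases hca : c = a
        · rw [hca]; exact haC
        · exact hl c (hrest c hc hca)

end Abstract

/-! ### The Cartan matrix of the quiver -/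

/-- The Cartan matrix of `Q`. -/
def cart (S : Setup) (a b : V S) : ℤ :=
  (if a = b then 2 else 0) - (arr S a b : ℤ) - (arr S b a : ℤ)

theorem arr_self (S : Setup) (a : V S) : arr S a a = 0 := by
  rcases a with ⟨i, j⟩ | ⟨i, j, k⟩
  · simp [arr]
  · simp [arr]

theorem cart_gcm (S : Setup) : GCM (cart S) where
  symm a b := by
    unfold cart
    by_cases h : a = b
    · subst h; ring
    · rw [if_neg h, if_neg (Ne.symm h)]; ring
  diag a := by simp [cart, arr_self]
  off a b h := by simp only [cart, h, if_false]; omega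

theorem bform_eq (S : Setup) (β γ : V S → ℤ) : bform S β γ = gform (cart S) β γ := by
  have h1 : ∀ β γ : V S → ℤ, ∑ a : V S, ∑ b : V S, (if a = b then 2 else 0) * (β a * γ b) =
      2 * ∑ a : V S, β a * γ a := by
    intro β γ
    rw [Finset.mul_sum]
    refine Finset.sum_congr rfl fun a _ => ?_
    rw [Fintype.sum_eq_single a]
    · simp
    · intro b hb; rw [if_neg (Ne.symm hb), zero_mul]
  have h2 : gform (cart S) β γ = (∑ a : V S, ∑ b : V S, (if a = b then 2 else 0) * (β a * γ b))
      - (∑ a : V S, ∑ b : V S, (arr S a b : ℤ) * β a * γ b)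
      - (∑ a : V S, ∑ b : V S, (arr S b a : ℤ) * γ b * β a) := by
    unfold gform
    rw [← Finset.sum_sub_distrib, ← Finset.sum_sub_distrib]
    refine Finset.sum_congr rfl fun a _ => ?_
    rw [← Finset.sum_sub_distrib, ← Finset.sum_sub_distrib]
    refine Finset.sum_congr rfl fun b _ => ?_
    unfold cart
    ring
  rw [h2, h1]
  unfold bform eform
  rw [Finset.sum_comm (f := fun a b => (arr S b a : ℤ) * γ b * β a)]
  have : ∑ a : V S, γ a * β a = ∑ a : V S, β a * γ a :=
    Finset.sum_congr rfl fun a _ => mul_comm _ _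
  rw [this]; ring

theorem eps_eq (S : Setup) (a : V S) : eps S a = E a := rfl

theorem reflList_eq (S : Setup) (l : List (V S)) (β : V S → ℤ) :
    reflList S l β = act (cart S) l β := by
  induction l with
  | nil => rfl
  | cons a l ih =>
    have : reflList S (a :: l) β = refl1 S a (reflList S l β) := rfl
    rw [this, ih, act_cons, Module.End.mul_apply, rfx_apply]
    funext b
    simp [refl1, bform_eq, eps_eq]

theorem cart_same (S : Setup) (i : {i : Fin (S.p+1) // Iirr S i}) (j j' : Fin (S.m i.1)) :
    cart S (vI S i j) (vI S i j') = if j = j' then 2 else -(dcnt S i.1 j j' : ℤ) := by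
  have hc : dcnt S i.1 j j' = dcnt S i.1 j' j := by
    unfold dcnt; rw [Polynomial.natDegree_sub]
  by_cases h : j = j'
  · subst h; simp [(cart_gcm S).diag]
  · have h' : vI S i j ≠ vI S i j' := by simpa [vI] using h
    simp only [cart, h', h, if_false]
    have : (j : ℕ) ≠ j' := fun hh => h (Fin.ext hh)
    rcases lt_or_gt_of_ne this with hl | hl
    · simp [vI, arr, hl, hl.le, not_lt.2 hl.le]
    · simp [vI, arr, hl, hl.le, not_lt.2 hl.le, hc]

theorem cart_ne (S : Setup) (i i' : {i : Fin (S.p+1) // Iirr S i}) (j : Fin (S.m i.1))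
    (j' : Fin (S.m i'.1)) (h : i ≠ i') :
    cart S (vI S i j) (vI S i' j') =
      - (if i.1 = 0 then 1 else 0) - (if i'.1 = 0 then 1 else 0) := by
  have hne : vI S i j ≠ vI S i' j' := by
    intro hh; apply h
    simp [vI] at hh; exact hh.1
  have h1 : i.1 ≠ i'.1 := fun hh => h (Subtype.ext hh)
  rw [cart, if_neg hne]
  simp only [vI, arr, h, h.symm, dif_neg, not_false_eq_true]
  by_cases h0 : i.1 = 0
  · have : i'.1 ≠ 0 := fun hh => h1 (h0.trans hh.symm)
    simp [h0, this]
  · by_cases h0' : i'.1 = 0 <;> simp [h0, h0']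

theorem epsJ_eq (S : Setup) (I : ∀ i : Fin (S.p+1), Fin (S.m i)) :
    epsJ S I = ∑ i : {i : Fin (S.p+1) // Iirr S i}, E (vI S i (I i.1)) := by
  funext a
  rw [Finset.sum_apply]
  rcases a with ⟨i, j⟩ | v
  · rw [Fintype.sum_eq_single i]
    · simp only [epsJ, E, vI]
      by_cases h : j = I i.1
      · simp [h]
      · have : (j : ℕ) ≠ (I i.1 : ℕ) := fun hh => h (Fin.ext hh)
        simp [h, this]
    · intro i' hi'
      have : ¬ (Sum.inl ⟨i, j⟩ : V S) = vI S i' (I i'.1) := by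
        intro hh; simp [vI] at hh; exact hi' hh.1.symm
      simp [E, this]
  · simp [epsJ, E, vI]

theorem gform_sum_left {X : Type} [Fintype X] [DecidableEq X] (B : X → X → ℤ) {ι : Type}
    (s : Finset ι) (f : ι → X → ℤ) (γ : X → ℤ) :
    gform B (∑ i ∈ s, f i) γ = ∑ i ∈ s, gform B (f i) γ := by
  classical
  induction s using Finset.induction_on with
  | empty => simp [gform]
  | insert a s ha ih => rw [Finset.sum_insert ha, Finset.sum_insert ha, gform_add_left, ih]

theorem gform_sum_right {X : Type} [Fintype X] [DecidableEq X] {B : X → X → ℤ} (h : GCM B)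
    {ι : Type} (s : Finset ι) (f : ι → X → ℤ) (γ : X → ℤ) :
    gform B γ (∑ i ∈ s, f i) = ∑ i ∈ s, gform B γ (f i) := by
  rw [gform_symm h, gform_sum_left]
  exact Finset.sum_congr rfl fun i _ => gform_symm h _ _

theorem gform_epsJ (S : Setup) (β : V S → ℤ) (I : ∀ i : Fin (S.p+1), Fin (S.m i)) :
    gform (cart S) β (epsJ S I) =
      ∑ i : {i : Fin (S.p+1) // Iirr S i}, gform (cart S) β (E (vI S i (I i.1))) := by
  rw [epsJ_eq, gform_sum_right (cart_gcm S)]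

theorem epsJ_RR (S : Setup) (I : ∀ i : Fin (S.p+1), Fin (S.m i)) :
    isRR (cart S) (epsJ S I) := by
  have key : ∀ T : Finset {i : Fin (S.p+1) // Iirr S i}, i0 S ∉ T →
      isRR (cart S) (E (vI S (i0 S) (I (i0 S).1)) + ∑ i ∈ T, E (vI S i (I i.1))) := by
    intro T
    induction T using Finset.induction_on with
    | empty => intro _; simpa using isRR_E _ _
    | insert a T ha ih =>
      intro h0
      have h0a : i0 S ≠ a := fun hh => h0 (by simp [hh])
      have ha0 : a.1 ≠ 0 := fun hh => h0a (Subtype.ext hh.symm)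
      have hr := isRR_rfx (ih (fun hh => h0 (by simp [hh]))) (vI S a (I a.1))
      have hp : gform (cart S) (E (vI S (i0 S) (I (i0 S).1)) + ∑ i ∈ T, E (vI S i (I i.1)))
          (E (vI S a (I a.1))) = -1 := by
        rw [gform_add_left, gform_sum_left, gform_EE, cart_ne _ _ _ _ _ h0a]
        rw [Finset.sum_eq_zero]
        · simp [i0, ha0]
        · intro i hi
          have hia : i ≠ a := by rintro rfl; exact ha hi
          have hi0 : i.1 ≠ 0 := by
            intro hh; apply h0
            have : i0 S = i := Subtype.ext hh.symm
            rw [this]; simp [hi]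
          rw [gform_EE, cart_ne _ _ _ _ _ hia]; simp [hi0, ha0]
      rw [rfx_apply, hp] at hr
      rw [Finset.sum_insert ha]
      convert hr using 1
      funext b; simp; ring
  have := key (Finset.univ.erase (i0 S)) (by simp)
  rw [epsJ_eq, ← Finset.add_sum_erase _ _ (Finset.mem_univ (i0 S))]
  exact this

theorem epsJ_nonneg (S : Setup) (I : ∀ i : Fin (S.p+1), Fin (S.m i)) : 0 ≤ epsJ S I := by
  intro a
  rcases a with ⟨i, j⟩ | v
  · simp only [epsJ]; split_ifs <;> simp
  · simp [epsJ]

/-- The pairing of two of the vectors `ε_𝐢`. -/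
theorem pairing (S : Setup) (x y : ∀ i : Fin (S.p+1), Fin (S.m i)) :
    gform (cart S) (epsJ S x) (epsJ S y) = 2 - ∑ i : {i : Fin (S.p+1) // Iirr S i},
      (if x i.1 = y i.1 then 0 else 2 + (dcnt S i.1 (x i.1) (y i.1) : ℤ)) := by
  rw [gform_epsJ, epsJ_eq]
  simp only [gform_sum_left, gform_EE]
  have hterm : ∀ i i' : {i : Fin (S.p+1) // Iirr S i},
      cart S (vI S i' (x i'.1)) (vI S i (y i.1)) =
      - (if i'.1 = 0 then 1 else 0) - (if i.1 = 0 then 1 else 0) +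
        (if i' = i then (2 - (if x i.1 = y i.1 then 0 else
          2 + (dcnt S i.1 (x i.1) (y i.1) : ℤ)) + 2 * (if i.1 = 0 then 1 else 0)) else 0) := by
    intro i i'
    by_cases h : i' = i
    · subst h
      rw [cart_same]
      rw [if_pos rfl]
      split_ifs <;> ring
    · rw [cart_ne _ _ _ _ _ h]; simp [h]
  have hz : ∑ i : {i : Fin (S.p+1) // Iirr S i}, (if i.1 = 0 then (1 : ℤ) else 0) = 1 := by
    rw [Fintype.sum_eq_single (i0 S)]
    · simp [i0]
    · intro i hi
      have : i.1 ≠ 0 := fun hh => hi (Subtype.ext hh)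
      simp [this]
  simp only [hterm, Finset.sum_add_distrib, Finset.sum_sub_distrib, Finset.sum_neg_distrib, hz,
    Finset.sum_const, Finset.sum_ite_eq', Finset.mem_univ, if_true, ← Finset.mul_sum,
    Finset.sum_ite_eq]
  simp only [nsmul_eq_mul, ← Finset.mul_sum, hz]
  ring

theorem unique_diff (S : Setup) (x y : ∀ i : Fin (S.p+1), Fin (S.m i))
    (h : gform (cart S) (epsJ S x) (epsJ S y) = 0) :
    ∃ p : {i : Fin (S.p+1) // Iirr S i}, x p.1 ≠ y p.1 ∧ dcnt S p.1 (x p.1) (y p.1) = 0 ∧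
      ∀ i : {i : Fin (S.p+1) // Iirr S i}, i ≠ p → x i.1 = y i.1 := by
  rw [pairing] at h
  set u : {i : Fin (S.p+1) // Iirr S i} → ℤ := fun i =>
    (if x i.1 = y i.1 then 0 else 2 + (dcnt S i.1 (x i.1) (y i.1) : ℤ)) with hu
  have hu0 : ∀ i, 0 ≤ u i := by intro i; simp only [hu]; split_ifs <;> omega
  have hsum : ∑ i, u i = 2 := by linarith
  obtain ⟨p, -, hp⟩ : ∃ p ∈ Finset.univ, u p ≠ 0 := by
    by_contra hcon
    push Not at hcon
    rw [Finset.sum_eq_zero hcon] at hsum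
    omega
  have hpxy : x p.1 ≠ y p.1 := by intro hh; apply hp; simp [hu, hh]
  have hup : u p = 2 + (dcnt S p.1 (x p.1) (y p.1) : ℤ) := by simp [hu, hpxy]
  have hs := Finset.add_sum_erase Finset.univ u (Finset.mem_univ p)
  have hr : 0 ≤ ∑ i ∈ Finset.univ.erase p, u i := Finset.sum_nonneg fun i _ => hu0 i
  refine ⟨p, hpxy, by omega, fun i hi => ?_⟩
  have hz : ∑ i ∈ Finset.univ.erase p, u i = 0 := by omega
  rw [Finset.sum_eq_zero_iff_of_nonneg (fun i _ => hu0 i)] at hz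
  have hui := hz i (by simp [hi])
  by_contra hne
  simp only [hu, hne, if_false] at hui
  omega

/-- The index type of the generators of `L⁺`. -/
abbrev Gen (S : Setup) := (∀ i : Fin (S.p+1), Fin (S.m i)) ⊕ Vr S

/-- The generators of `L⁺`. -/
def gen (S : Setup) : Gen S → V S → ℤ
  | .inl I => epsJ S I
  | .inr v => E (Sum.inr v)

theorem gen_RR (S : Setup) (s : Gen S) : isRR (cart S) (gen S s) := by
  rcases s with I | v
  · exact epsJ_RR S I
  · exact isRR_E _ _

theorem gen_nonneg (S : Setup) (s : Gen S) : 0 ≤ gen S s := by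
  rcases s with I | v
  · exact epsJ_nonneg S I
  · intro b; simp only [gen, E]; split_ifs <;> simp

theorem inL_gen (S : Setup) (s : Gen S) : inL S (gen S s) := by
  intro i hi
  rcases s with I | v
  · have : ∀ i : {i : Fin (S.p+1) // Iirr S i},
        ∑ j : Fin (S.m i.1), epsJ S I (vI S i j) = 1 := by
      intro i
      rw [Fintype.sum_eq_single (I i.1)]
      · simp [vI, epsJ]
      · intro j hj
        have : (j : ℕ) ≠ (I i.1 : ℕ) := fun hh => hj (Fin.ext hh)
        simp [vI, epsJ, this]
    simp only [gen]
    rw [this i]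
    exact this (i0 S)
  · simp [gen, E, v0, vI]

theorem inL_of_decomp (S : Setup) (N : ℤ) (hN : 0 < N) (c : Gen S → ℤ) (γ : V S → ℤ)
    (h : N • γ = ∑ s, c s • gen S s) : inL S γ := by
  intro i hi
  have hco : ∀ a, N * γ a = ∑ s, c s * gen S s a := by
    intro a
    have := congrFun h a
    simpa only [Pi.smul_apply, smul_eq_mul, Finset.sum_apply] using this
  have : N * (∑ j : Fin (S.m 0), γ (v0 S j)) = N * ∑ j : Fin (S.m i.1), γ (vI S i j) := by
    rw [Finset.mul_sum, Finset.mul_sum]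
    simp only [hco]
    rw [Finset.sum_comm, Finset.sum_comm (s := (Finset.univ : Finset (Fin (S.m i.1))))]
    refine Finset.sum_congr rfl fun s _ => ?_
    rw [← Finset.mul_sum, ← Finset.mul_sum, inL_gen S s i hi]
  exact mul_left_cancel₀ hN.ne' this

/-- Sums over the block at a fixed index do not depend on the index. -/
theorem inL_sum (S : Setup) (γ : V S → ℤ) (hL : inL S γ) (i : {i : Fin (S.p+1) // Iirr S i}) :
    ∑ j : Fin (S.m i.1), γ (vI S i j) = ∑ j : Fin (S.m 0), γ (v0 S j) := by
  by_cases hi : i.1 = 0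
  · have : i = i0 S := Subtype.ext hi
    subst this
    rfl
  · exact (hL i hi).symm

theorem sum_choice {ι : Type} [Fintype ι] [DecidableEq ι] (m : ι → ℕ) (g : ∀ i, Fin (m i) → ℤ)
    (i' : ι) (j : Fin (m i')) :
    ∑ I : (∀ i, Fin (m i)), (∏ i, g i (I i)) * (if (j : ℕ) = (I i' : ℕ) then 1 else 0) =
      g i' j * ∏ i ∈ Finset.univ.erase i', ∑ k, g i k := by
  let gsel : ∀ i, Fin (m i) → ℤ := fun i k => if i = i' ∧ (j : ℕ) ≠ (k : ℕ) then 0 else g i k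
  have h1 : ∀ I : (∀ i, Fin (m i)),
      (∏ i, g i (I i)) * (if (j : ℕ) = (I i' : ℕ) then 1 else 0) = ∏ i, gsel i (I i) := by
    intro I
    by_cases h : (j : ℕ) = (I i' : ℕ)
    · rw [if_pos h, mul_one]
      refine Finset.prod_congr rfl fun i _ => ?_
      have : ¬ (i = i' ∧ (j : ℕ) ≠ (I i : ℕ)) := by
        rintro ⟨rfl, h2⟩; exact h2 h
      simp only [gsel, this, if_false]
    · rw [if_neg h, mul_zero]
      symm
      apply Finset.prod_eq_zero (Finset.mem_univ i')
      simp [gsel, h]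
  simp only [h1]
  have h2 := Finset.prod_univ_sum (fun i => (Finset.univ : Finset (Fin (m i)))) gsel
  rw [Fintype.piFinset_univ] at h2
  rw [← h2, ← Finset.mul_prod_erase _ _ (Finset.mem_univ i')]
  congr 1
  · rw [Fintype.sum_eq_single j]
    · simp [gsel]
    · intro k hk
      have : (j : ℕ) ≠ k := fun hh => hk (Fin.ext hh).symm
      simp [gsel, this]
  · refine Finset.prod_congr rfl fun i hi => ?_
    have : i ≠ i' := Finset.ne_of_mem_erase hi
    simp [gsel, this]

/-- Decomposition of elements of `L⁺`. -/
theorem decomp (S : Setup) (γ : V S → ℤ) (hL : inL S γ) (h0 : ∀ a, 0 ≤ γ a) :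
    ∃ (N : ℤ) (c : Gen S → ℤ), 0 < N ∧ (∀ s, 0 ≤ c s) ∧ N • γ = ∑ s, c s • gen S s ∧
      ∀ I : ∀ i : Fin (S.p+1), Fin (S.m i),
        (∀ i : {i : Fin (S.p+1) // Iirr S i}, 0 < γ (vI S i (I i.1))) → 0 < c (Sum.inl I) := by
  have hleg : ∀ (N : ℤ) (w : Vr S),
      ∑ v : Vr S, (N * γ (Sum.inr v)) * (E (Sum.inr v) : V S → ℤ) (Sum.inr w) =
        N * γ (Sum.inr w) := by
    intro N w
    rw [Fintype.sum_eq_single w]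
    · simp [E]
    · intro v hv
      have : ¬ w = v := fun hh => hv hh.symm
      simp [E, this]
  set n := ∑ j : Fin (S.m 0), γ (v0 S j) with hn
  have hn0 : 0 ≤ n := Finset.sum_nonneg fun j _ => h0 _
  rcases hn0.eq_or_lt with hz | hpos
  · have hv : ∀ (i : {i : Fin (S.p+1) // Iirr S i}) (j : Fin (S.m i.1)), γ (vI S i j) = 0 := by
      intro i j
      have := inL_sum S γ hL i
      rw [← hn, ← hz, Finset.sum_eq_zero_iff_of_nonneg (fun j _ => h0 _)] at this
      exact this j (Finset.mem_univ _)
    refine ⟨1, Sum.elim (fun _ => 0) (fun v => 1 * γ (Sum.inr v)), one_pos, ?_, ?_, ?_⟩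
    · rintro (I | v)
      · simp
      · simpa using h0 _
    · funext a
      rw [Finset.sum_apply, Fintype.sum_sum_type]
      rcases a with ⟨i, j⟩ | w
      · have := hv i j
        simp only [vI] at this
        simp [gen, E, this]
      · simp only [Sum.elim_inl, Sum.elim_inr, gen, Pi.smul_apply, smul_eq_mul, hleg]
        simp
    · intro I hI
      have := hI (i0 S)
      rw [hv] at this
      omega
  · let g : ∀ i : Fin (S.p+1), Fin (S.m i) → ℤ := fun i j =>
      if h : Iirr S i then γ (vI S ⟨i, h⟩ j) else 1
    have hg0 : ∀ i j, 0 ≤ g i j := by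
      intro i j; simp only [g]; split_ifs
      · exact h0 _
      · norm_num
    have hgi : ∀ i : {i : Fin (S.p+1) // Iirr S i}, ∀ j, g i.1 j = γ (vI S i j) := by
      intro i j; simp [g, i.2]
    have hT : ∀ i, 0 < ∑ k, g i k := by
      intro i
      by_cases h : Iirr S i
      · have := inL_sum S γ hL ⟨i, h⟩
        have h2 : ∑ k, g i k = n := by
          rw [hn, ← this]; exact Finset.sum_congr rfl fun j _ => hgi ⟨i, h⟩ j
        omega
      · have := S.hm i
        simp [g, h]; exact this
    have hTi : ∀ i : {i : Fin (S.p+1) // Iirr S i}, ∑ k, g i.1 k = n := by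
      intro i
      rw [hn, ← inL_sum S γ hL i]; exact Finset.sum_congr rfl fun j _ => hgi i j
    set N := ∏ i, ∑ k, g i k with hN
    have hNpos : 0 < N := Finset.prod_pos fun i _ => hT i
    refine ⟨N, Sum.elim (fun I => n * ∏ i, g i (I i)) (fun v => N * γ (Sum.inr v)), hNpos,
      ?_, ?_, ?_⟩
    · rintro (I | v)
      · exact mul_nonneg hn0 (Finset.prod_nonneg fun i _ => hg0 _ _)
      · exact mul_nonneg hNpos.le (h0 _)
    · funext a
      rw [Finset.sum_apply, Fintype.sum_sum_type]
      simp only [Sum.elim_inl, Sum.elim_inr, gen, Pi.smul_apply, smul_eq_mul]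
      rcases a with ⟨i, j⟩ | w
      · have h1 : ∑ v : Vr S, N * γ (Sum.inr v) * (E (Sum.inr v) : V S → ℤ) (Sum.inl ⟨i, j⟩)
            = 0 := Finset.sum_eq_zero fun v _ => by simp [E]
        rw [h1, add_zero]
        simp only [epsJ, mul_assoc]
        rw [← Finset.mul_sum, sum_choice S.m g i.1 j, hgi, hN,
          ← Finset.mul_prod_erase _ _ (Finset.mem_univ i.1), hTi]
        simp only [vI]
        ring
      · rw [hleg]; simp [epsJ]
    · intro I hI
      refine mul_pos hpos (Finset.prod_pos fun i _ => ?_)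
      by_cases h : Iirr S i
      · have := hI ⟨i, h⟩
        rw [← hgi ⟨i, h⟩] at this
        exact this
      · simp [g, h]

/-- The values along a leg, extended by zero. -/
def legv (S : Setup) (β : V S → ℤ) (i : Fin (S.p+1)) (j : Fin (S.m i)) (k : ℕ) : ℤ :=
  if h : k < S.e i j - 1 then β (Sum.inr ⟨i, j, ⟨k, h⟩⟩) else 0

/-- The value at the root of a leg. -/
def rootv (S : Setup) (β : V S → ℤ) (i : Fin (S.p+1)) (j : Fin (S.m i)) : ℤ :=
  ∑ v : Vb S, β (Sum.inl v) * ((if i = v.1.1 ∧ (j : ℕ) = (v.2 : ℕ) then 1 else 0) +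
      (if ¬ Iirr S i ∧ v.1.1 = 0 ∧ (j : ℕ) = 0 then 1 else 0))

theorem legv_sum (S : Setup) (β : V S → ℤ) (i : Fin (S.p+1)) (j : Fin (S.m i)) (k : ℕ) :
    ∑ v : Vr S, β (Sum.inr v) *
      (if v.1 = i ∧ (v.2.1 : ℕ) = (j : ℕ) ∧ (v.2.2 : ℕ) = k then 1 else 0) = legv S β i j k := by
  unfold legv
  split_ifs with h
  · rw [Fintype.sum_eq_single ⟨i, j, ⟨k, h⟩⟩]
    · simp
    · rintro ⟨i', j', k'⟩ hne
      rw [if_neg, mul_zero]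
      rintro ⟨h1, h2, h3⟩
      dsimp only at h1 h2 h3
      subst h1
      have h2' := Fin.ext h2
      subst h2'
      subst h3
      exact hne rfl
  · refine Finset.sum_eq_zero ?_
    rintro ⟨i', j', k'⟩ -
    rw [if_neg, mul_zero]
    rintro ⟨h1, h2, h3⟩
    dsimp only at h1 h2 h3
    subst h1
    have h2' := Fin.ext h2
    subst h2'
    subst h3
    exact h k'.2

theorem gform_leg (S : Setup) (β : V S → ℤ) (i : Fin (S.p+1)) (j : Fin (S.m i))
    (k : Fin (S.e i j - 1)) :
    gform (cart S) β (E (Sum.inr ⟨i, j, k⟩)) =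
      2 * legv S β i j k - (if (k : ℕ) = 0 then rootv S β i j else legv S β i j (k - 1))
        - legv S β i j (k + 1) := by
  rw [gform_E, Fintype.sum_sum_type]
  have h1 : ∑ v : Vb S, β (Sum.inl v) * cart S (Sum.inl v) (Sum.inr ⟨i, j, k⟩) =
      - (if (k : ℕ) = 0 then rootv S β i j else 0) := by
    by_cases hk : (k : ℕ) = 0
    · rw [if_pos hk, rootv, ← Finset.sum_neg_distrib]
      refine Finset.sum_congr rfl ?_
      rintro ⟨i', j'⟩ -
      simp [cart, arr, hk]
      ring
    · rw [if_neg hk, neg_zero]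
      refine Finset.sum_eq_zero ?_
      rintro ⟨i', j'⟩ -
      simp [cart, arr, hk]
  have h2 : ∀ v : Vr S, β (Sum.inr v) * cart S (Sum.inr v) (Sum.inr ⟨i, j, k⟩) =
      2 * (β (Sum.inr v) *
        (if v.1 = i ∧ (v.2.1 : ℕ) = (j : ℕ) ∧ (v.2.2 : ℕ) = (k : ℕ) then 1 else 0))
      - (if (k : ℕ) = 0 then 0 else (β (Sum.inr v) *
        (if v.1 = i ∧ (v.2.1 : ℕ) = (j : ℕ) ∧ (v.2.2 : ℕ) = (k : ℕ) - 1 then 1 else 0)))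
      - β (Sum.inr v) *
        (if v.1 = i ∧ (v.2.1 : ℕ) = (j : ℕ) ∧ (v.2.2 : ℕ) = (k : ℕ) + 1 then 1 else 0) := by
    rintro ⟨i', j', k'⟩
    have e1 : ((Sum.inr ⟨i', j', k'⟩ : V S) = Sum.inr ⟨i, j, k⟩) ↔
        (i' = i ∧ (j' : ℕ) = (j : ℕ) ∧ (k' : ℕ) = (k : ℕ)) := by
      constructor
      · intro h
        have h' := Sum.inr.inj h
        cases h'
        exact ⟨rfl, rfl, rfl⟩
      · rintro ⟨h1, h2, h3⟩
        subst h1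
        have h2' := Fin.ext h2
        subst h2'
        have h3' := Fin.ext h3
        subst h3'
        rfl
    by_cases hi : i' = i
    · by_cases hj : (j' : ℕ) = (j : ℕ)
      · subst hi
        simp only [cart, e1, arr, hj, true_and]
        by_cases hk : (k : ℕ) = 0
        · simp only [hk]
          rcases Nat.eq_zero_or_pos (k' : ℕ) with hk' | hk'
          · simp [hk']; ring
          · have : (k' : ℕ) ≠ 0 := by omega
            simp [this]
        · have h3 : ((k : ℕ) = (k' : ℕ) + 1) ↔ ((k' : ℕ) = (k : ℕ) - 1) := by omega
          simp only [h3, hk, if_false]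
          push_cast
          by_cases hkk : (k' : ℕ) = (k : ℕ)
          · simp only [hkk, if_true]; ring
          · simp only [hkk, if_false]; ring
      · have hj' : ¬ (j : ℕ) = j' := fun h => hj h.symm
        simp [cart, e1, arr, hj, hj']
    · have hi' : ¬ i = i' := fun h => hi h.symm
      simp [cart, e1, arr, hi, hi']
  rw [h1]
  simp only [h2, Finset.sum_sub_distrib, ← Finset.mul_sum, legv_sum]
  by_cases hk : (k : ℕ) = 0
  · simp [hk]; ring
  · simp only [hk, if_false, legv_sum]; ring

theorem leg_conv (S : Setup) (β : V S → ℤ) (h0 : ∀ a, 0 ≤ β a)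
    (hl : ∀ v : Vr S, gform (cart S) β (E (Sum.inr v)) ≤ 0) (i : Fin (S.p+1)) (j : Fin (S.m i)) :
    (∀ k, legv S β i j (k+1) ≤ legv S β i j k) ∧ legv S β i j 0 ≤ rootv S β i j := by
  have hnn : ∀ k, 0 ≤ legv S β i j k := by
    intro k; unfold legv; split_ifs
    · exact h0 _
    · exact le_rfl
  have hz : ∀ k, S.e i j - 1 ≤ k → legv S β i j k = 0 := by
    intro k hk; unfold legv; rw [dif_neg (by omega)]
  have hroot : 0 ≤ rootv S β i j := by
    refine Finset.sum_nonneg fun v _ => mul_nonneg (h0 _) ?_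
    split_ifs <;> norm_num
  have hstep : ∀ d k, S.e i j - 1 ≤ k + d → legv S β i j (k+1) ≤ legv S β i j k := by
    intro d
    induction d with
    | zero => intro k hk; rw [hz (k+1) (by omega)]; exact hnn k
    | succ d ih =>
      intro k hk
      by_cases hlt : k + 1 < S.e i j - 1
      · have h1 := ih (k+1) (by omega)
        have h2 := hl ⟨i, j, ⟨k+1, hlt⟩⟩
        rw [gform_leg] at h2
        simp at h2
        omega
      · rw [hz (k+1) (by omega)]; exact hnn k
  have hmono : ∀ k, legv S β i j (k+1) ≤ legv S β i j k := fun k =>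
    hstep (S.e i j) k (by omega)
  refine ⟨hmono, ?_⟩
  by_cases hlt : 0 < S.e i j - 1
  · have h2 := hl ⟨i, j, ⟨0, hlt⟩⟩
    rw [gform_leg] at h2
    have h1 := hmono 0
    simp at h2 h1
    omega
  · rw [hz 0 (by omega)]; exact hroot

theorem rootv_irr (S : Setup) (β : V S → ℤ) (i : {i : Fin (S.p+1) // Iirr S i})
    (j : Fin (S.m i.1)) : rootv S β i.1 j = β (vI S i j) := by
  unfold rootv
  rw [Fintype.sum_eq_single ⟨i, j⟩]
  · simp [vI, i.2]
  · rintro ⟨i', j'⟩ hne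
    have : ¬ (i.1 = i'.1 ∧ (j : ℕ) = (j' : ℕ)) := by
      rintro ⟨h1, h2⟩
      have h1' := Subtype.ext h1
      subst h1'
      have h2' := Fin.ext h2
      subst h2'
      exact hne rfl
    simp only [this, if_false, i.2]
    simp

theorem zero_of_inl_zero (S : Setup) (β : V S → ℤ) (h0 : ∀ a, 0 ≤ β a)
    (hl : ∀ v : Vr S, gform (cart S) β (E (Sum.inr v)) ≤ 0)
    (hz : ∀ v : Vb S, β (Sum.inl v) = 0) : β = 0 := by
  funext a
  rcases a with v | ⟨i, j, k⟩
  · exact hz v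
  · obtain ⟨h1, h2⟩ := leg_conv S β h0 hl i j
    have hr : rootv S β i j = 0 := by
      unfold rootv; exact Finset.sum_eq_zero fun v _ => by rw [hz, zero_mul]
    have hk : ∀ k, legv S β i j k ≤ 0 := by
      intro k
      induction k with
      | zero => omega
      | succ k ih => exact (h1 k).trans ih
    have h3 := hk k
    unfold legv at h3
    rw [dif_pos k.2] at h3
    exact le_antisymm h3 (h0 _)

/-- Tuples supported on a vector. -/
def full (S : Setup) (β : V S → ℤ) (I : ∀ i : Fin (S.p+1), Fin (S.m i)) : Prop :=
  ∀ i : {i : Fin (S.p+1) // Iirr S i}, 0 < β (vI S i (I i.1))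

theorem exists_full (S : Setup) (β : V S → ℤ) (hL : inL S β) (h0 : ∀ a, 0 ≤ β a)
    (hl : ∀ v : Vr S, gform (cart S) β (E (Sum.inr v)) ≤ 0) (hne : β ≠ 0) :
    ∃ I, full S β I := by
  have hn : 0 < ∑ j : Fin (S.m 0), β (v0 S j) := by
    refine lt_of_le_of_ne (Finset.sum_nonneg fun j _ => h0 _) fun hz => hne ?_
    refine zero_of_inl_zero S β h0 hl ?_
    rintro ⟨i, j⟩
    have := inL_sum S β hL i
    rw [← hz, Finset.sum_eq_zero_iff_of_nonneg (fun j _ => h0 _)] at this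
    exact this j (Finset.mem_univ _)
  have hex : ∀ i : Fin (S.p+1), ∃ j : Fin (S.m i), ∀ h : Iirr S i, 0 < β (vI S ⟨i, h⟩ j) := by
    intro i
    by_cases h : Iirr S i
    · have hs := inL_sum S β hL ⟨i, h⟩
      rw [← hs] at hn
      obtain ⟨j, -, hj⟩ := Finset.exists_lt_of_sum_lt (s := Finset.univ) (f := fun _ => (0 : ℤ))
        (g := fun j : Fin (S.m i) => β (vI S ⟨i, h⟩ j)) (by simpa using hn)
      exact ⟨j, fun _ => hj⟩
    · exact ⟨⟨0, S.hm i⟩, fun h' => absurd h' h⟩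
  choose I hI using hex
  exact ⟨I, fun i => hI i.1 i.2⟩

/-- The combinatorial contradiction. -/
theorem no_split (S : Setup) (βA βB : V S → ℤ) (hLA : inL S βA) (hLB : inL S βB)
    (hA0 : ∀ a, 0 ≤ βA a) (hB0 : ∀ a, 0 ≤ βB a)
    (hAl : ∀ v : Vr S, gform (cart S) βA (E (Sum.inr v)) ≤ 0)
    (hBl : ∀ v : Vr S, gform (cart S) βB (E (Sum.inr v)) ≤ 0)
    (hAJ : ∀ I, gform (cart S) βA (epsJ S I) ≤ 0)
    (hA : βA ≠ 0) (hB : βB ≠ 0)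
    (hxy : ∀ x y, full S βA x → full S βB y → gform (cart S) (epsJ S x) (epsJ S y) = 0)
    (hy : ∀ y, full S βB y → gform (cart S) βA (epsJ S y) = 0) : False := by
  obtain ⟨x, hx⟩ := exists_full S βA hLA hA0 hAl hA
  obtain ⟨y, hyB⟩ := exists_full S βB hLB hB0 hBl hB
  obtain ⟨p, hp1, hp2, hp3⟩ := unique_diff S x y (hxy x y hx hyB)
  have hj : ∀ j : Fin (S.m p.1), 0 < βA (vI S p j) →
      j ≠ y p.1 ∧ dcnt S p.1 j (y p.1) = 0 := by
    intro j hjp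
    have hfull : full S βA (Function.update x p.1 j) := by
      intro i
      by_cases hi : i = p
      · subst hi; simpa using hjp
      · have : i.1 ≠ p.1 := fun hh => hi (Subtype.ext hh)
        rw [Function.update_of_ne this]; exact hx i
    obtain ⟨p', h1, h2, h3⟩ := unique_diff S _ y (hxy _ y hfull hyB)
    have hpp : p' = p := by
      by_contra hne
      have : p'.1 ≠ p.1 := fun hh => hne (Subtype.ext hh)
      rw [Function.update_of_ne this] at h1
      exact h1 (hp3 p' hne)
    subst hpp
    rw [Function.update_self] at h1 h2
    exact ⟨h1, h2⟩
  have hd : ∀ j : Fin (S.m p.1), 0 < βA (vI S p j) → dcnt S p.1 j (x p.1) = 0 := by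
    intro j hjp
    have h1 := (hj j hjp).2
    unfold dcnt at h1 hp2 ⊢
    have h2 : S.q p.1 j - S.q p.1 (x p.1) =
        (S.q p.1 j - S.q p.1 (y p.1)) - (S.q p.1 (x p.1) - S.q p.1 (y p.1)) := by ring
    have h3 := Polynomial.natDegree_sub_le (S.q p.1 j - S.q p.1 (y p.1))
      (S.q p.1 (x p.1) - S.q p.1 (y p.1))
    rw [← h2] at h3
    have h4 := le_max_iff.1 h3
    omega
  have hcmp : gform (cart S) βA (E (vI S p (x p.1))) ≤ gform (cart S) βA (E (vI S p (y p.1))) := by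
    have h1 := hAJ x
    have h2 := hy y hyB
    rw [gform_epsJ, ← Finset.add_sum_erase _ _ (Finset.mem_univ p)] at h1 h2
    have h3 : ∑ i ∈ Finset.univ.erase p, gform (cart S) βA (E (vI S i (x i.1))) =
        ∑ i ∈ Finset.univ.erase p, gform (cart S) βA (E (vI S i (y i.1))) := by
      refine Finset.sum_congr rfl fun i hi => ?_
      rw [hp3 i (Finset.ne_of_mem_erase hi)]
    rw [h3] at h1
    omega
  have hlow : 2 * βA (vI S p (x p.1)) - legv S βA p.1 (x p.1) 0 ≤
      gform (cart S) βA (E (vI S p (x p.1))) - gform (cart S) βA (E (vI S p (y p.1))) := by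
    rw [gform_E, gform_E, ← Finset.sum_sub_distrib, Fintype.sum_sum_type, ← legv_sum,
      sub_eq_add_neg, ← Finset.sum_neg_distrib]
    refine add_le_add ?_ (Finset.sum_le_sum ?_)
    · have : 2 * βA (vI S p (x p.1)) = ∑ v : Vb S, βA (Sum.inl v) *
          (if v = ⟨p, x p.1⟩ then 2 else 0) := by
        rw [Fintype.sum_eq_single ⟨p, x p.1⟩]
        · simp [vI]; ring
        · intro v hv; rw [if_neg hv, mul_zero]
      rw [this]
      refine Finset.sum_le_sum ?_
      rintro ⟨i, j⟩ -
      rw [← mul_sub]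
      by_cases hip : i = p
      · subst hip
        rcases (hA0 (Sum.inl ⟨i, j⟩)).eq_or_lt with hz | hz
        · rw [← hz]; simp
        · have h1 := hj j hz
          have h2 := hd j hz
          have c1 := cart_same S i j (x i.1)
          have c2 := cart_same S i j (y i.1)
          rw [if_neg h1.1, h1.2] at c2
          rw [h2] at c1
          simp only [vI] at c1 c2
          simp only [vI]
          rw [c1, c2]
          by_cases hjx : j = x i.1 <;> simp [hjx]
      · have c1 := cart_ne S i p j (x p.1) hip
        have c2 := cart_ne S i p j (y p.1) hip
        have hne : ¬ ((⟨i, j⟩ : Vb S) = ⟨p, x p.1⟩) := by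
          intro hh; exact hip (congrArg Sigma.fst hh)
        simp only [vI] at c1 c2
        simp only [vI]
        rw [c1, c2, if_neg hne]; simp
    · rintro ⟨i, j, k⟩ -
      have h0 := hA0 (Sum.inr ⟨i, j, k⟩)
      rw [← mul_sub, ← mul_neg]
      refine mul_le_mul_of_nonneg_left ?_ h0
      simp only [cart, vI, arr]
      by_cases hi : i = p.1 <;> by_cases hjx : (j : ℕ) = (x p.1 : ℕ) <;>
        by_cases hk : (k : ℕ) = 0 <;> simp [hi, hjx, hk] <;> split_ifs <;> simp
  have hle := (leg_conv S βA hA0 hAl p.1 (x p.1)).2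
  rw [rootv_irr] at hle
  have := hx p
  omega

/-! ### The final argument -/

theorem act_reverse' {X : Type} [Fintype X] [DecidableEq X] {B : X → X → ℤ} (h : GCM B)
    (l : List X) (β : X → ℤ) : act B l (act B l.reverse β) = β := by
  have := act_reverse h l.reverse
  rw [List.reverse_reverse] at this
  rw [← Module.End.mul_apply, this, Module.End.one_apply]

theorem act_reverse_apply {X : Type} [Fintype X] [DecidableEq X] {B : X → X → ℤ} (h : GCM B)
    (l : List X) (β : X → ℤ) : act B l.reverse (act B l β) = β := by
  rw [← Module.End.mul_apply, act_reverse h, Module.End.one_apply]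

theorem gform_zero {X : Type} [Fintype X] [DecidableEq X] {B : X → X → ℤ} (β γ : X → ℤ)
    (h : ∀ a b, β a ≠ 0 → γ b ≠ 0 → B a b = 0) : gform B β γ = 0 := by
  refine Finset.sum_eq_zero fun a _ => Finset.sum_eq_zero fun b _ => ?_
  by_cases ha : β a = 0
  · rw [ha]; ring
  by_cases hb : γ b = 0
  · rw [hb]; ring
  rw [h a b ha hb, mul_zero]

theorem act_decomp {X : Type} [Fintype X] [DecidableEq X] {B : X → X → ℤ} {ι : Type} [Fintype ι]
    (N : ℤ) (c : ι → ℤ) (β : X → ℤ) (α : ι → X → ℤ) (he : N • β = ∑ s, c s • α s)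
    (l : List X) : N • act B l β = ∑ s, c s • act B l (α s) := by
  rw [← map_smul, he, map_sum]
  exact Finset.sum_congr rfl fun s _ => map_smul _ _ _

theorem supp_of_decomp {X : Type} [Fintype X] {ι : Type} [Fintype ι]
    (N : ℤ) (c : ι → ℤ) (hc : ∀ s, 0 ≤ c s) (β : X → ℤ) (α : ι → X → ℤ)
    (he : N • β = ∑ s, c s • α s) (hα : ∀ s, 0 ≤ α s) (s : ι) (hs : 0 < c s) (a : X)
    (ha : β a = 0) : α s a = 0 := by
  have h1 := congrFun he a
  simp only [Pi.smul_apply, smul_eq_mul, Finset.sum_apply, ha, mul_zero] at h1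
  have h2 := (Finset.sum_eq_zero_iff_of_nonneg
    (fun t _ => mul_nonneg (hc t) (hα t a))).1 h1.symm s (Finset.mem_univ s)
  rcases mul_eq_zero.1 h2 with h3 | h3
  · omega
  · exact h3

/-- Restriction of a vector to a set of vertices. -/
def restr {X : Type} (C : Set X) (γ : X → ℤ) : X → ℤ :=
  open Classical in fun a => if a ∈ C then γ a else 0

theorem restr_mem {X : Type} (C : Set X) (γ : X → ℤ) (a : X) (h : a ∈ C) : restr C γ a = γ a := by
  simp [restr, h]

theorem restr_not_mem {X : Type} (C : Set X) (γ : X → ℤ) (a : X) (h : a ∉ C) :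
    restr C γ a = 0 := by
  simp [restr, h]

theorem restr_nonneg {X : Type} (C : Set X) (γ : X → ℤ) (h : 0 ≤ γ) : 0 ≤ restr C γ := by
  intro a
  by_cases ha : a ∈ C
  · rw [restr_mem _ _ _ ha]; exact h a
  · rw [restr_not_mem _ _ _ ha]; exact le_rfl

theorem restr_anti {X : Type} [Fintype X] [DecidableEq X] {B : X → X → ℤ} (h : GCM B)
    (C : Set X) (γ : X → ℤ) (h0 : 0 ≤ γ) (hd : ∀ a, gform B γ (E a) ≤ 0)
    (hC : ∀ a b, γ a ≠ 0 → γ b ≠ 0 → a ∈ C → b ∉ C → B a b = 0) (a : X) :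
    gform B (restr C γ) (E a) ≤ 0 := by
  have h0' := restr_nonneg C γ h0
  by_cases ha : restr C γ a = 0
  · rw [gform_E]
    refine Finset.sum_nonpos fun b _ => ?_
    by_cases hb : b = a
    · rw [hb, ha, zero_mul]
    · exact mul_nonpos_of_nonneg_of_nonpos (h0' b) (h.off b a hb)
  · have haC : a ∈ C := by
      by_contra hh; exact ha (restr_not_mem _ _ _ hh)
    rw [restr_mem _ _ _ haC] at ha
    have : gform B (restr C γ) (E a) = gform B γ (E a) := by
      rw [gform_E, gform_E]
      refine Finset.sum_congr rfl fun b _ => ?_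
      by_cases hb : b ∈ C
      · rw [restr_mem _ _ _ hb]
      · rw [restr_not_mem _ _ _ hb, zero_mul]
        by_cases hb0 : γ b = 0
        · rw [hb0, zero_mul]
        · rw [h.symm b a, hC a b ha hb0 haC hb, mul_zero]
    rw [this]; exact hd a

/-- Splitting a decomposition along a disconnected support. -/
theorem split_decomp {X : Type} [Fintype X] [DecidableEq X] {B : X → X → ℤ} (h : GCM B)
    {ι : Type} [Fintype ι] (N : ℤ) (c : ι → ℤ) (hc : ∀ s, 0 ≤ c s) (γ : X → ℤ) (α : ι → X → ℤ)
    (he : N • γ = ∑ s, c s • α s) (hr : ∀ s, isRR B (α s)) (hα : ∀ s, 0 ≤ α s)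
    (C : Set X) (hC : ∀ a b, γ a ≠ 0 → γ b ≠ 0 → a ∈ C → b ∉ C → B a b = 0) :
    ∃ c' : ι → ℤ, (∀ s, 0 ≤ c' s) ∧ N • restr C γ = ∑ s, c' s • α s := by
  classical
  refine ⟨fun s => if ∀ a, α s a ≠ 0 → a ∈ C then c s else 0, fun s => ?_, ?_⟩
  · dsimp only
    split_ifs
    · exact hc s
    · exact le_rfl
  · funext a
    have h1 := congrFun he a
    simp only [Pi.smul_apply, smul_eq_mul, Finset.sum_apply] at h1 ⊢
    have hdich : ∀ s, c s ≠ 0 → (∀ a, α s a ≠ 0 → a ∈ C) ∨ (∀ a, α s a ≠ 0 → a ∉ C) := by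
      intro s hs
      have hsub : ∀ a, α s a ≠ 0 → γ a ≠ 0 := by
        intro a ha hγ
        exact ha (supp_of_decomp N c hc γ α he hα s (lt_of_le_of_ne (hc s) (Ne.symm hs)) a hγ)
      have hn : (0 : ℤ) ≤ ∑ a, α s a := Finset.sum_nonneg fun a _ => hα s a
      exact conn_RR h (∑ a, α s a).toNat (α s) (Int.self_le_toNat _) (hr s) (hα s) C
        (fun a b ha hb => hC a b (hsub a ha) (hsub b hb))
    by_cases haC : a ∈ C
    · rw [restr_mem _ _ _ haC, h1]
      refine Finset.sum_congr rfl fun s _ => ?_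
      by_cases hcs : c s = 0
      · simp [hcs]
      by_cases has : α s a = 0
      · rw [has, mul_zero, mul_zero]
      rcases hdich s hcs with h2 | h2
      · rw [if_pos h2]
      · exact absurd haC (h2 a has)
    · rw [restr_not_mem _ _ _ haC, mul_zero]
      symm
      refine Finset.sum_eq_zero fun s _ => ?_
      split_ifs with h2
      · by_cases has : α s a = 0
        · rw [has, mul_zero]
        · exact absurd (h2 a has) haC
      · rw [zero_mul]

theorem gform_nonpos {X : Type} [Fintype X] [DecidableEq X] {B : X → X → ℤ} (γ α : X → ℤ)
    (hd : ∀ a, gform B γ (E a) ≤ 0) (h0 : 0 ≤ α) : gform B γ α ≤ 0 := by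
  rw [gform_eq_sum]
  exact Finset.sum_nonpos fun a _ => mul_nonpos_of_nonneg_of_nonpos (h0 a) (hd a)

/-- Properties of one piece of a splitting. -/
theorem piece (S : Setup) (l : List (V S)) (N : ℤ) (hN : 0 < N) (c : Gen S → ℤ)
    (hc : ∀ s, 0 ≤ c s) (γ : V S → ℤ) (h0 : 0 ≤ γ)
    (he : N • γ = ∑ s, c s • act (cart S) l (gen S s))
    (hd : ∀ a, gform (cart S) γ (E a) ≤ 0)
    (hr : ∀ s, isRR (cart S) (act (cart S) l (gen S s)))
    (hα : ∀ s, 0 ≤ act (cart S) l (gen S s))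
    (C : Set (V S)) (hC : ∀ a b, γ a ≠ 0 → γ b ≠ 0 → a ∈ C → b ∉ C → cart S a b = 0)
    (hne : restr C γ ≠ 0) :
    ∃ βC : V S → ℤ, act (cart S) l βC = restr C γ ∧ inL S βC ∧ (∀ a, 0 ≤ βC a) ∧ βC ≠ 0 ∧
      (∀ s, gform (cart S) βC (gen S s) ≤ 0) ∧
      ∀ x, full S βC x → ∀ a, act (cart S) l (epsJ S x) a ≠ 0 → γ a ≠ 0 ∧ a ∈ C := by
  have hG := cart_gcm S
  set βC := act (cart S) l.reverse (restr C γ) with hβ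
  have hact : act (cart S) l βC = restr C γ := act_reverse' hG l _
  obtain ⟨c', hc', he'⟩ := split_decomp hG N c hc γ _ he hr hα C hC
  have he2 : N • βC = ∑ s, c' s • gen S s := by
    have := act_decomp (B := cart S) N c' _ _ he' l.reverse
    simpa only [act_reverse_apply hG] using this
  have hL : inL S βC := inL_of_decomp S N hN c' βC he2
  have hpos : ∀ a, 0 ≤ βC a := by
    intro a
    have h1 := congrFun he2 a
    simp only [Pi.smul_apply, smul_eq_mul, Finset.sum_apply] at h1
    have h2 : 0 ≤ ∑ s, c' s * gen S s a :=
      Finset.sum_nonneg fun s _ => mul_nonneg (hc' s) (gen_nonneg S s a)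
    rw [← h1] at h2
    exact nonneg_of_mul_nonneg_right h2 hN
  refine ⟨βC, hact, hL, hpos, ?_, ?_, ?_⟩
  · intro hz
    rw [hz, map_zero] at hact
    exact hne hact.symm
  · intro s
    rw [← gform_act hG l, hact]
    exact gform_nonpos _ _ (restr_anti hG C γ h0 hd hC) (hα s)
  · intro x hx a ha
    obtain ⟨N', d, hN', hd0, hde, hdx⟩ := decomp S βC hL hpos
    have h1 := act_decomp (B := cart S) N' d _ _ hde l
    rw [hact] at h1
    have h2 : restr C γ a ≠ 0 := by
      intro hz
      exact ha (supp_of_decomp N' d hd0 _ _ h1 hα (Sum.inl x) (hdx x hx) a hz)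
    have haC : a ∈ C := by
      by_contra hh; exact h2 (restr_not_mem _ _ _ hh)
    rw [restr_mem _ _ _ haC] at h2
    exact ⟨h2, haC⟩

theorem main_aux (S : Setup) (β : V S → ℤ) (hL : inL S β) (h0 : ∀ a, 0 ≤ β a) (hne : β ≠ 0)
    (hgen : ∀ s, gform (cart S) β (gen S s) ≤ 0) : isImagRoot S β := by
  have hG := cart_gcm S
  obtain ⟨N, c, hN, hc, he, -⟩ := decomp S β hL h0
  obtain ⟨l, h1, h2, h3⟩ := descent hG N hN c hc (∑ a, β a).toNat β (gen S)
    (Int.self_le_toNat _) (gen_RR S) (gen_nonneg S) hgen he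
  set γ := act (cart S) l β with hγ
  have hβγ : β = act (cart S) l.reverse γ := (act_reverse_apply hG l β).symm
  have heγ := act_decomp (B := cart S) N c _ _ he l
  rw [← hγ] at heγ
  refine ⟨l.reverse, γ, Or.inl ⟨?_, h1, ?_, ?_⟩, by rw [reflList_eq, ← hβγ]⟩
  · intro hz
    rw [hz, map_zero] at hβγ
    exact hne hβγ
  · intro a ha b hb
    by_contra hab
    set R : V S → V S → Prop :=
      fun x y => (0 < arr S x y + arr S y x) ∧ x ∈ supp S γ ∧ y ∈ supp S γ with hR
    set C : Set (V S) := {x | Relation.ReflTransGen R a x} with hCdef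
    have haC : a ∈ C := Relation.ReflTransGen.refl
    have hbC : b ∉ C := hab
    have hC : ∀ x y, γ x ≠ 0 → γ y ≠ 0 → x ∈ C → y ∉ C → cart S x y = 0 := by
      intro x y hx hy hxC hyC
      have hxy : x ≠ y := by rintro rfl; exact hyC hxC
      have : ¬ 0 < arr S x y + arr S y x := fun hh =>
        hyC (Relation.ReflTransGen.tail hxC ⟨hh, hx, hy⟩)
      rw [cart, if_neg hxy]
      omega
    have hC' : ∀ x y, γ x ≠ 0 → γ y ≠ 0 → x ∈ Cᶜ → y ∉ Cᶜ → cart S x y = 0 := by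
      intro x y hx hy hxC hyC
      rw [hG.symm]
      exact hC y x hy hx (not_not.1 hyC) hxC
    obtain ⟨βA, hA1, hA2, hA3, hA4, hA5, hA6⟩ := piece S l N hN c hc γ h1 heγ h2
      (fun s => (h3 s).1) (fun s => (h3 s).2) C hC (fun hz => by
        have := congrFun hz a
        rw [restr_mem _ _ _ haC] at this
        exact ha this)
    obtain ⟨βB, hB1, hB2, hB3, hB4, hB5, hB6⟩ := piece S l N hN c hc γ h1 heγ h2
      (fun s => (h3 s).1) (fun s => (h3 s).2) Cᶜ hC' (fun hz => by
        have := congrFun hz b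
        rw [restr_mem _ _ _ hbC] at this
        exact hb this)
    refine no_split S βA βB hA2 hB2 hA3 hB3 (fun v => hA5 (Sum.inr v)) (fun v => hB5 (Sum.inr v))
      (fun I => hA5 (Sum.inl I)) hA4 hB4 ?_ ?_
    · intro x y hx hy
      rw [← gform_act hG l]
      refine gform_zero _ _ fun u v hu hv => ?_
      have hu' := hA6 x hx u hu
      have hv' := hB6 y hy v hv
      exact hC u v hu'.1 hv'.1 hu'.2 hv'.2
    · intro y hy
      rw [← gform_act hG l, hA1]
      refine gform_zero _ _ fun u v hu hv => ?_
      have huC : u ∈ C := by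
        by_contra hh; exact hu (restr_not_mem _ _ _ hh)
      rw [restr_mem _ _ _ huC] at hu
      have hv' := hB6 y hy v hv
      exact hC u v hu hv'.1 huC hv'.2
  · intro a
    rw [bform_eq]
    exact h2 a

/-- Every element of the quasi-fundamental set `F̃` is a positive imaginary root
of the quiver `Q`. -/
theorem statement6 (S : Setup) (β : V S → ℤ) (hβ : quasiFund S β) :
    isImagRoot S β ∧ ∀ a, 0 ≤ β a := by
  obtain ⟨hL, h0, hne, hJ, hl, -⟩ := hβ
  refine ⟨main_aux S β hL h0 hne ?_, h0⟩
  rintro (I | ⟨i, j, k⟩)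
  · have := hJ I
    rwa [bform_eq] at this
  · have := hl i j k
    rwa [bform_eq] at this

end

end DS
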